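/- Let Γ ⊂ PSL(3,ℂ) be a discrete group and let Ω ⊆ ℙ²_ℂ be either Eq(Γ), the Kulkarni discontinuity region Ω(Γ), or a maximal open set on which Γ acts properly discontinuously, with 4 ≤ LiG(Ω) < ∞. Let ℒ be a family of complex lines in general position contained in ℙ²_ℂ∖Ω with card(ℒ) = LiG(Ω). Then every complex line ℓ ⊂ ℙ²_ℂ that does not contain any vertex of ℒ has infinite orbit under Γ. -/

import Mathlib

/-!
Suppose that the orbit of `ℓ` is finite. By maximality of `L`, a point lying on infinitely many
lines of the complement of `Ω` is a crossing of two lines of `L`. Such points are therefore finite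
in number, permuted by `Γ`, and vertices, hence off `ℓ`; and only finitely many lines of the
complement miss all of them. If there are two such points, a subgroup of finite index fixes both
together with `ℓ`, so it consists of perspectivities whose axis is the line joining them. Otherwise
a subgroup of finite index fixes a point and two lines of `L` missing it, so it consists of
perspectivities whose centre is the common point of these lines.

Write the perspectivities as `1 + N`. The matrices `N` have rank at most one and form a group of
affine type: either every multiplier `1 + tr N` has modulus one and, by discreteness, some nonzero
`N` is traceless, or all `N` lie on one line. In each case suitable multiples of the `1 + N` fill
out a compact set of matrices, the singular ones among which map into a line, or into a line and a
point, consisting of limits of points with infinite isotropy. For each of the three kinds of domain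
the complement is then contained in that set, which contains at most two lines in general position,
whereas `L` has at least four.
-/

open scoped LinearAlgebra.Projectivization
open Projectivization Matrix Topology

noncomputable section

abbrev V3 : Type := Fin 3 → ℂ
abbrev SL3 := Matrix.SpecialLinearGroup (Fin 3) ℂ
abbrev PSL3 := SL3 ⧸ Subgroup.center SL3
abbrev P2 := ℙ ℂ V3

instance : TopologicalSpace P2 := instTopologicalSpaceQuotient

/-- The action of `SL(3,ℂ)` on `ℙ²_ℂ`. -/
def smulP2 (A : SL3) : P2 → P2 :=
  Projectivization.map ((Matrix.SpecialLinearGroup.toLin' A : V3 ≃ₗ[ℂ] V3) : V3 →ₗ[ℂ] V3)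
    (Matrix.SpecialLinearGroup.toLin' A).injective

lemma smulP2_mk (A : SL3) (v : V3) (hv : v ≠ 0) :
    smulP2 A (Projectivization.mk ℂ v hv) =
      Projectivization.mk ℂ (Matrix.SpecialLinearGroup.toLin' A v)
        ((Matrix.SpecialLinearGroup.toLin' A).map_ne_zero_iff.mpr hv) := rfl

lemma smulP2_one : smulP2 (1 : SL3) = id := by
  funext x
  induction x using Projectivization.ind with
  | h v hv => simp [smulP2_mk]

lemma smulP2_mul (A B : SL3) : smulP2 (A * B) = smulP2 A ∘ smulP2 B := by
  funext x
  induction x using Projectivization.ind with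
  | h v hv =>
    simp only [smulP2_mk, Function.comp_apply, _root_.map_mul]
    rfl

lemma continuous_smulP2 (A : SL3) : Continuous (smulP2 A) := by
  unfold smulP2 Projectivization.map
  exact Continuous.quotient_map'
    ((((Matrix.SpecialLinearGroup.toLin' A : V3 ≃ₗ[ℂ] V3) :
        V3 →ₗ[ℂ] V3).continuous_of_finiteDimensional.comp
      continuous_subtype_val).subtype_mk _) _
lemma smulP2_center (A : SL3) (hA : A ∈ Subgroup.center SL3) : smulP2 A = id := by
  obtain ⟨r, hr3, hrA⟩ := Matrix.SpecialLinearGroup.mem_center_iff.mp hA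
  have hr0 : r ≠ 0 := by
    intro h
    rw [h] at hr3
    simp at hr3
  funext x
  induction x using Projectivization.ind with
  | h v hv =>
    have hAv : Matrix.SpecialLinearGroup.toLin' A v = r • v := by
      rw [Matrix.SpecialLinearGroup.toLin'_apply]
      have : ((A : Matrix (Fin 3) (Fin 3) ℂ)) = Matrix.scalar (Fin 3) r := by
        rw [← hrA]
      rw [this]
      funext i
      simp [Matrix.toLin'_apply, Matrix.scalar, Matrix.mulVec_diagonal]
  
    simp only [smulP2_mk, id_eq]
    rw [Projectivization.mk_eq_mk_iff]
    exact ⟨Units.mk0 r hr0, by simp [hAv]⟩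

/-- The action of `SL(3,ℂ)` on `ℙ²` as a homomorphism into permutations. -/
def slPerm : SL3 →* Equiv.Perm P2 where
  toFun A :=
    { toFun := smulP2 A
      invFun := smulP2 A⁻¹
      left_inv := fun x => by
        have := (smulP2_mul A⁻¹ A).symm
        simp only [inv_mul_cancel, smulP2_one] at this
        exact congrFun this x
      right_inv := fun x => by
        have := (smulP2_mul A A⁻¹).symm
        simp only [mul_inv_cancel, smulP2_one] at this
        exact congrFun this x }
  map_one' := by
    ext x
    simp [smulP2_one]
  map_mul' A B := by
    ext x
    simp [smulP2_mul]

/-- The action of `PSL(3,ℂ)` on `ℙ²` as a homomorphism into permutations. -/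
def actHom : PSL3 →* Equiv.Perm P2 :=
  QuotientGroup.lift (Subgroup.center SL3) slPerm (by
    intro A hA
    ext x
    simpa [slPerm] using congrFun (smulP2_center A hA) x)

/-- The action of an element of `PSL(3,ℂ)` on `ℙ²`. -/
def pact (g : PSL3) : P2 → P2 := actHom g

instance : MulAction PSL3 P2 where
  smul g x := pact g x
  one_smul x := by
    show pact 1 x = x
    simp [pact]
  mul_smul g h x := by
    show pact (g * h) x = pact g (pact h x)
    simp [pact]

lemma pact_mk (A : SL3) : pact ((QuotientGroup.mk A : PSL3)) = smulP2 A := by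
  funext x
  simp [pact, actHom, slPerm]

lemma continuous_pact (g : PSL3) : Continuous (pact g) := by
  obtain ⟨A, rfl⟩ := QuotientGroup.mk_surjective g
  rw [pact_mk]
  exact continuous_smulP2 A

/-- The action of an element of `PSL(3,ℂ)` on `ℙ²`, as a continuous map. -/
def pactCM (g : PSL3) : C(P2, P2) := ⟨pact g, continuous_pact g⟩
instance : TopologicalSpace SL3 := instTopologicalSpaceSubtype

/-- A complex line in `ℙ²_ℂ`: the set of points whose representing vectors lie in
a fixed 2-dimensional complex linear subspace of `ℂ³`. -/
def IsLine (ℓ : Set P2) : Prop :=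
  ∃ W : Submodule ℂ V3, Module.finrank ℂ W = 2 ∧ ℓ = {p : P2 | p.submodule ≤ W}

/-- The set of complex lines contained in a given subset of `ℙ²_ℂ`. -/
def linesIn (S : Set P2) : Set (Set P2) := {ℓ | IsLine ℓ ∧ ℓ ⊆ S}

/-- A family of lines is in general position if no point lies on three
(pairwise distinct) lines of the family. -/
def InGenPos (L : Set (Set P2)) : Prop :=
  ∀ p : P2, ∀ ℓ₁ ∈ L, ∀ ℓ₂ ∈ L, ∀ ℓ₃ ∈ L,
    p ∈ ℓ₁ → p ∈ ℓ₂ → p ∈ ℓ₃ → ℓ₁ = ℓ₂ ∨ ℓ₁ = ℓ₃ ∨ ℓ₂ = ℓ₃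

/-- The families of complex lines in general position contained in the complement of `Ω`. -/
def genFamilies (Ω : Set P2) : Set (Set (Set P2)) :=
  {L | (∀ ℓ ∈ L, IsLine ℓ ∧ ℓ ⊆ Ωᶜ) ∧ InGenPos L}

/-- `Li Ω` : the number (in `ℕ∞`) of complex lines contained in the complement of `Ω`. -/
def Li (Ω : Set P2) : ℕ∞ := (linesIn Ωᶜ).encard

/-- `LiG Ω` : the maximal number (in `ℕ∞`) of complex lines in general position contained
in the complement of `Ω`. -/
def LiG (Ω : Set P2) : ℕ∞ := ⨆ L ∈ genFamilies Ω, L.encard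

/-- `Γ` acts properly discontinuously on the nonempty open invariant set `Ω`. -/
def ActsPropDiscOn (Γ : Subgroup PSL3) (Ω : Set P2) : Prop :=
  Ω.Nonempty ∧ IsOpen Ω ∧ (∀ γ ∈ Γ, pact γ '' Ω = Ω) ∧
    ∀ K : Set P2, K ⊆ Ω → IsCompact K →
      {γ : PSL3 | γ ∈ Γ ∧ ((pact γ '' K) ∩ K).Nonempty}.Finite

/-- `Ω` is a maximal open set on which `Γ` acts properly discontinuously. -/
def MaxDisc (Γ : Subgroup PSL3) (Ω : Set P2) : Prop :=
  ActsPropDiscOn Γ Ω ∧ ∀ Ω' : Set P2, ActsPropDiscOn Γ Ω' → Ω ⊆ Ω' → Ω' = Ω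

/-- `L0 Γ` : the closure of the set of points with infinite isotropy group. -/
def L0 (Γ : Subgroup PSL3) : Set P2 :=
  closure {z : P2 | {γ : PSL3 | γ ∈ Γ ∧ pact γ z = z}.Infinite}

/-- The cluster points of the orbit `Γ z`. -/
def orbitCluster (Γ : Subgroup PSL3) (z : P2) : Set P2 :=
  {w : P2 | ∀ U ∈ nhds w, {γ : PSL3 | γ ∈ Γ ∧ pact γ z ∈ U}.Infinite}

/-- The cluster points of `Γ K` for a set `K`. -/
def setCluster (Γ : Subgroup PSL3) (K : Set P2) : Set P2 :=
  {w : P2 | ∀ U ∈ nhds w, {γ : PSL3 | γ ∈ Γ ∧ ((pact γ '' K) ∩ U).Nonempty}.Infinite}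

/-- `L1 Γ` : the closure of the set of cluster points of orbits `Γ z`, `z ∉ L0 Γ`. -/
def L1 (Γ : Subgroup PSL3) : Set P2 :=
  closure (⋃ z ∈ (L0 Γ)ᶜ, orbitCluster Γ z)

/-- `L2 Γ` : the closure of the set of cluster points of `Γ K`,
`K` a compact subset of `ℙ²_ℂ ∖ (L0 Γ ∪ L1 Γ)`. -/
def L2 (Γ : Subgroup PSL3) : Set P2 :=
  closure (⋃ K ∈ {K : Set P2 | IsCompact K ∧ K ⊆ (L0 Γ ∪ L1 Γ)ᶜ}, setCluster Γ K)

/-- The Kulkarni limit set `Λ(Γ)`. -/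
def kulkarniLimit (Γ : Subgroup PSL3) : Set P2 := L0 Γ ∪ L1 Γ ∪ L2 Γ

/-- The Kulkarni discontinuity region `Ω(Γ)`. -/
def kulkarniRegion (Γ : Subgroup PSL3) : Set P2 := (kulkarniLimit Γ)ᶜ

/-- `C(Γ)` : the closure of the union of the Kulkarni limit sets of the cyclic
subgroups generated by the elements of `Γ`. -/
def CSet (Γ : Subgroup PSL3) : Set P2 :=
  closure (⋃ γ ∈ Γ, kulkarniLimit (Subgroup.zpowers γ))

/-- The equicontinuity set of `Γ` : points having a neighborhood `U` on which the
restrictions of the elements of `Γ` form a normal family, i.e. a relatively compact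
subset of `C(U, ℙ²_ℂ)` for the compact-open topology. -/
def eqSet (Γ : Subgroup PSL3) : Set P2 :=
  {z : P2 | ∃ U : Set P2, IsOpen U ∧ z ∈ U ∧
    IsCompact (closure {f : C(U, P2) | ∃ γ ∈ Γ, f = (pactCM γ).restrict U})}

/-- A vertex of a family `L` of lines lying in the complement of `Ω`. -/
def IsVertex (Ω : Set P2) (L : Set (Set P2)) (v : P2) : Prop :=
  ∃ ℓ₁ ∈ L, ∃ ℓ₂ ∈ L, ℓ₁ ≠ ℓ₂ ∧ ∃ C : Set (Set P2), C.Infinite ∧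
    (∀ ℓ ∈ C, IsLine ℓ ∧ ℓ ⊆ Ωᶜ) ∧ ℓ₁ ∩ ℓ₂ ∩ ⋂₀ C = {v}

open Classical

/-- Projection from the point `p` onto the line determined by `W` : `projPt p W x` is
the intersection point of the line through `p` and `x` with the line determined by `W`
(junk value if it is not unique). -/
def projPt (p : P2) (W : Submodule ℂ V3) (x : P2) : P2 :=
  if h : ∃ y : P2, y.submodule ≤ W ∧ y.submodule ≤ p.submodule ⊔ x.submodule
  then h.choose else x

/-- The algebra of `3 × 3` complex matrices. -/
abbrev Mat3 := Matrix (Fin 3) (Fin 3) ℂ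

/-! ### Topology of the projective plane and of `PSL(3,ℂ)` -/

lemma mk_units_smul (a : ℂˣ) {v : V3} (hv : v ≠ 0) (hav : a • v ≠ 0) :
    (Projectivization.mk ℂ (a • v) hav : P2) = Projectivization.mk ℂ v hv :=
  (Projectivization.mk_eq_mk_iff ..).mpr ⟨a, rfl⟩

lemma isOpenQuotientMap_mk :
    IsOpenQuotientMap (fun v : {v : V3 // v ≠ 0} => (Projectivization.mk ℂ v.1 v.2 : P2)) := by
  refine .of_isOpenMap_isQuotientMap (fun s hs => ?_) isQuotientMap_quotient_mk'
  let scale (a : ℂˣ) (v : {v : V3 // v ≠ 0}) : {v : V3 // v ≠ 0} :=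
    ⟨a • v.1, (smul_ne_zero_iff_ne a).mpr v.2⟩
  have hscale (a : ℂˣ) : Continuous (scale a) :=
    (continuous_subtype_val.const_smul a).subtype_mk _
  have hpre : (fun v : {v : V3 // v ≠ 0} => (Quotient.mk'' v : P2)) ⁻¹'
      ((fun v : {v : V3 // v ≠ 0} => (Projectivization.mk ℂ v.1 v.2 : P2)) '' s) =
      ⋃ a : ℂˣ, scale a ⁻¹' s := by
    ext w
    simp only [Set.mem_preimage, Set.mem_iUnion]
    constructor
    · rintro ⟨v, hv, h⟩
      obtain ⟨a, ha⟩ := (Projectivization.mk_eq_mk_iff ..).mp h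
      exact ⟨a, by rwa [show scale a w = v from Subtype.ext ha]⟩
    · rintro ⟨a, ha⟩
      exact ⟨_, ha, mk_units_smul a w.2 _⟩
  exact isQuotientMap_quotient_mk'.isOpen_preimage.mp
    (hpre ▸ isOpen_iUnion fun a => hs.preimage (hscale a))

instance : T2Space P2 := by
  rw [t2Space_iff_of_isOpenQuotientMap isOpenQuotientMap_mk]
  simp only [Projectivization.mk_eq_mk_iff_crossProduct_eq_zero]
  have hcross : Continuous fun x : V3 × V3 => x.1 ⨯₃ x.2 := by
    simp only [cross_apply]
    fun_prop
  exact isClosed_eq (hcross.comp (continuous_subtype_val.prodMap continuous_subtype_val))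
    continuous_const

instance : CompactSpace P2 := by
  have hne (v : Metric.sphere (0 : V3) 1) : v.1 ≠ 0 := ne_zero_of_mem_unit_sphere v
  let f : Metric.sphere (0 : V3) 1 → P2 := fun v => Projectivization.mk ℂ v.1 (hne v)
  have hf : Continuous f :=
    isOpenQuotientMap_mk.continuous.comp (continuous_subtype_val.subtype_mk hne)
  have hs : Function.Surjective f := by
    intro p
    induction p using Projectivization.ind with
    | h v hv =>
      refine ⟨⟨((‖v‖ : ℂ)⁻¹) • v, by simp [norm_smul, hv]⟩, ?_⟩
      exact (Projectivization.mk_eq_mk_iff' ..).mpr ⟨_, rfl⟩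
  exact hs.compactSpace hf

instance : IsTopologicalGroup SL3 :=
  Matrix.SpecialLinearGroup.topologicalGroup

instance : T2Space SL3 := inferInstanceAs (T2Space {A : Mat3 // A.det = 1})

instance : IsClosed (Subgroup.center SL3 : Set SL3) := by
  rw [Subgroup.coe_center, ← Set.centralizer_univ]
  exact Set.isClosed_centralizer _

/-! ### Matrices acting on the projective plane -/

/-- The map of `ℙ²_ℂ` induced by a possibly singular matrix; it is the identity, as a junk value,
on the projectivised kernel. -/
def mact (M : Mat3) (p : P2) : P2 :=
  if h : M *ᵥ p.rep ≠ 0 then Projectivization.mk ℂ (M *ᵥ p.rep) h else p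

lemma mact_mk {M : Mat3} {v : V3} (hv : v ≠ 0) (h : M *ᵥ v ≠ 0) :
    mact M (Projectivization.mk ℂ v hv) = Projectivization.mk ℂ (M *ᵥ v) h := by
  obtain ⟨a, ha⟩ := Projectivization.exists_smul_eq_mk_rep ℂ v hv
  have hrep : M *ᵥ (Projectivization.mk ℂ v hv).rep = a • (M *ᵥ v) := by
    rw [← ha, Units.smul_def, Matrix.mulVec_smul, Units.smul_def]
  have hne : M *ᵥ (Projectivization.mk ℂ v hv).rep ≠ 0 := by
    rw [hrep]
    exact (smul_ne_zero_iff_ne a).mpr h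
  rw [mact, dif_pos hne]
  simp only [hrep, mk_units_smul a h]

lemma continuousAt_mact {M : Mat3} {v : V3} (hv : v ≠ 0) (h : M *ᵥ v ≠ 0) :
    ContinuousAt (fun x : Mat3 × P2 => mact x.1 x.2) (M, Projectivization.mk ℂ v hv) := by
  have hquot := (IsOpenQuotientMap.id (X := Mat3)).prodMap isOpenQuotientMap_mk
  refine (hquot.continuousAt_comp_iff (g := fun x : Mat3 × P2 => mact x.1 x.2)
    (x := (M, ⟨v, hv⟩))).mp ?_
  have hmul : Continuous (fun x : Mat3 × {v : V3 // v ≠ 0} => x.1 *ᵥ x.2.1) :=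
    continuous_fst.matrix_mulVec (continuous_subtype_val.comp continuous_snd)
  let O : Set (Mat3 × {v : V3 // v ≠ 0}) := {x | x.1 *ᵥ x.2.1 ≠ 0}
  have hO : IsOpen O := isOpen_ne_fun hmul continuous_const
  refine ContinuousOn.continuousAt (s := O) ?_ (hO.mem_nhds h)
  rw [continuousOn_iff_continuous_domRestrict]
  exact (isOpenQuotientMap_mk.continuous.comp
    ((hmul.comp continuous_subtype_val).subtype_mk fun x => x.2)).congr
    fun x => (mact_mk x.1.2.2 x.2).symm

/-- `M` is a matrix inducing the projective transformation `γ`. -/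
def IsLift (γ : PSL3) (M : Mat3) : Prop :=
  ∃ A : SL3, (QuotientGroup.mk A : PSL3) = γ ∧ ∃ s : ℂ, s ≠ 0 ∧ M = s • (A : Mat3)

lemma exists_isLift (γ : PSL3) : ∃ M, IsLift γ M := by
  obtain ⟨A, rfl⟩ := QuotientGroup.mk_surjective γ
  exact ⟨A, A, rfl, 1, one_ne_zero, (one_smul _ _).symm⟩

namespace IsLift

variable {γ γ' : PSL3} {M N : Mat3}

lemma one : IsLift 1 1 := ⟨1, rfl, 1, one_ne_zero, by simp⟩

lemma det_ne_zero (h : IsLift γ M) : M.det ≠ 0 := by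
  obtain ⟨A, -, s, hs, rfl⟩ := h
  rw [Matrix.det_smul, A.2, mul_one]
  exact pow_ne_zero _ hs

lemma mulVec_ne_zero (h : IsLift γ M) {v : V3} (hv : v ≠ 0) : M *ᵥ v ≠ 0 :=
  fun h0 => hv (Matrix.eq_zero_of_mulVec_eq_zero h.det_ne_zero h0)

lemma smul_mk (h : IsLift γ M) {v : V3} (hv : v ≠ 0) :
    γ • (Projectivization.mk ℂ v hv : P2) =
      Projectivization.mk ℂ (M *ᵥ v) (h.mulVec_ne_zero hv) := by
  obtain ⟨A, rfl, s, hs, rfl⟩ := h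
  change pact _ _ = _
  rw [pact_mk, smulP2_mk, Projectivization.mk_eq_mk_iff']
  refine ⟨s⁻¹, ?_⟩
  rw [Matrix.smul_mulVec, inv_smul_smul₀ hs, Matrix.SpecialLinearGroup.toLin'_apply,
    Matrix.toLin'_apply]

lemma smul_eq_mact (h : IsLift γ M) (p : P2) : γ • p = mact M p := by
  induction p using Projectivization.ind with
  | h v hv => rw [h.smul_mk, mact_mk]

lemma mact_mul (h : IsLift γ M) {v : V3} (hv : v ≠ 0) (hN : N *ᵥ v ≠ 0) :
    mact (M * N) (Projectivization.mk ℂ v hv) = γ • mact N (Projectivization.mk ℂ v hv) := by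
  have hMN : (M * N) *ᵥ v ≠ 0 := by
    rw [← Matrix.mulVec_mulVec]
    exact h.mulVec_ne_zero hN
  rw [mact_mk hv hMN, mact_mk hv hN, h.smul_mk]
  simp only [Matrix.mulVec_mulVec]

lemma mul (h : IsLift γ M) (h' : IsLift γ' N) : IsLift (γ * γ') (M * N) := by
  obtain ⟨A, rfl, s, hs, rfl⟩ := h
  obtain ⟨B, rfl, t, ht, rfl⟩ := h'
  exact ⟨A * B, rfl, s * t, mul_ne_zero hs ht, by
    rw [Matrix.SpecialLinearGroup.coe_mul, Matrix.smul_mul, Matrix.mul_smul, smul_smul]⟩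

lemma inv (h : IsLift γ M) : IsLift γ⁻¹ M⁻¹ := by
  obtain ⟨A, rfl, s, hs, rfl⟩ := h
  refine ⟨A⁻¹, rfl, s⁻¹, inv_ne_zero hs, Matrix.inv_eq_right_inv ?_⟩
  rw [Matrix.smul_mul, Matrix.mul_smul, smul_inv_smul₀ hs, ← Matrix.SpecialLinearGroup.coe_mul,
    mul_inv_cancel, Matrix.SpecialLinearGroup.coe_one]

lemma smul (h : IsLift γ M) {s : ℂ} (hs : s ≠ 0) : IsLift γ (s • M) := by
  obtain ⟨A, hA, t, ht, rfl⟩ := h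
  exact ⟨A, hA, s * t, mul_ne_zero hs ht, smul_smul _ _ _⟩

lemma exists_eq_smul (h : IsLift γ M) (h' : IsLift γ N) : ∃ s : ℂ, N = s • M := by
  obtain ⟨A, hA, s, hs, rfl⟩ := h
  obtain ⟨B, rfl, t, -, rfl⟩ := h'
  obtain ⟨r, -, hr⟩ := Matrix.SpecialLinearGroup.mem_center_iff.mp (QuotientGroup.eq.mp hA)
  have hB : (B : Mat3) = r • (A : Mat3) := by
    rw [← mul_inv_cancel_left A B, Matrix.SpecialLinearGroup.coe_mul, ← hr]
    ext i j
    simp [mul_comm]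
  exact ⟨t * r * s⁻¹, by rw [hB, mul_smul, inv_smul_smul₀ hs, mul_smul]⟩

end IsLift

lemma isCompact_setOf_smul_mem {C : Set Mat3} (hC : IsCompact C) (hdet : ∀ M ∈ C, M.det ≠ 0) :
    IsCompact {A : SL3 | ∃ s : ℂ, s • (A : Mat3) ∈ C} := by
  obtain ⟨D, hD⟩ : ∃ D : ℝ, ∀ M ∈ C, ‖(M.det)⁻¹‖ ≤ D :=
    hC.exists_bound_of_continuousOn (continuous_id.matrix_det.continuousOn.inv₀ hdet)
  let N : Set (ℂ × Mat3) :=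
    (Metric.closedBall 0 (max 1 D) ×ˢ C) ∩ {x | x.1 ^ 3 * x.2.det = 1}
  have hN : IsCompact N := ((isCompact_closedBall _ _).prod hC).inter_right
    (isClosed_eq (by fun_prop) continuous_const)
  have hcl : IsClosed {A : Mat3 | A.det = 1} :=
    isClosed_eq continuous_id.matrix_det continuous_const
  suffices {A : SL3 | ∃ s : ℂ, s • (A : Mat3) ∈ C} =
      (fun A : SL3 => (A : Mat3)) ⁻¹' ((fun x : ℂ × Mat3 => x.1 • x.2) '' N) by
    rw [this]
    exact hcl.isClosedEmbedding_subtypeVal.isCompact_preimage (hN.image (by fun_prop))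
  ext A
  constructor
  · rintro ⟨s, hs⟩
    have hs0 : s ≠ 0 := by
      rintro rfl
      simpa using hdet _ hs
    have hdetA : (s • (A : Mat3)).det = s ^ 3 := by rw [Matrix.det_smul, A.2]; simp
    refine ⟨(s⁻¹, s • (A : Mat3)), ⟨⟨?_, hs⟩, ?_⟩, inv_smul_smul₀ hs0 _⟩
    · have hle : ‖s⁻¹‖ ^ 3 ≤ D := by simpa only [hdetA, ← inv_pow, norm_pow] using hD _ hs
      rw [mem_closedBall_zero_iff, le_max_iff, or_iff_not_imp_left, not_le]
      exact fun h1 => (le_self_pow₀ h1.le (by norm_num)).trans hle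
    · simp only [Set.mem_ofPred_eq, hdetA]
      rw [← mul_pow, inv_mul_cancel₀ hs0, one_pow]
  · rintro ⟨⟨z, M⟩, ⟨⟨-, hM⟩, hz⟩, hA⟩
    have hz0 : z ≠ 0 := by
      rintro rfl
      simp at hz
    have hinv : z⁻¹ • (A : Mat3) = M := (inv_smul_eq_iff₀ hz0).mpr hA.symm
    exact ⟨z⁻¹, hinv ▸ hM⟩

/-- Compactness bounds the scalars relating the given lifts to the unimodular ones. -/
lemma finite_setOf_exists_isLift_mem (Γ : Subgroup PSL3) [DiscreteTopology Γ] {C : Set Mat3}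
    (hC : IsCompact C) (hdet : ∀ M ∈ C, M.det ≠ 0) :
    {γ : PSL3 | γ ∈ Γ ∧ ∃ M ∈ C, IsLift γ M}.Finite := by
  have hB := (isCompact_setOf_smul_mem hC hdet).image
    (QuotientGroup.continuous_mk : Continuous (QuotientGroup.mk : SL3 → PSL3))
  have hΓ : IsClosed (Γ : Set PSL3) := Subgroup.isClosed_of_discrete
  refine ((hΓ.isClosedEmbedding_subtypeVal.isCompact_preimage hB).finite_of_discrete.image
    Subtype.val).subset ?_
  rintro γ ⟨hγ, _, hM, A, rfl, s, -, rfl⟩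
  exact ⟨⟨_, hγ⟩, ⟨A, ⟨s, hM⟩, rfl⟩, rfl⟩

/-! ### Subgroups of finite index -/

section FiniteIndex

variable {G : Type*} [Group G] {H K : Subgroup G}

lemma exists_finite_transversal (h : H.relIndex K ≠ 0) :
    ∃ F : Set G, F.Finite ∧ F ⊆ K ∧ ∀ g ∈ K, ∃ f ∈ F, f⁻¹ * g ∈ H := by
  have : (H.subgroupOf K).FiniteIndex := ⟨h⟩
  refine ⟨Set.range fun q : K ⧸ H.subgroupOf K => (q.out : G), Set.finite_range _, ?_, ?_⟩
  · rintro _ ⟨q, rfl⟩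
    exact q.out.2
  · intro g hg
    let q : K ⧸ H.subgroupOf K := QuotientGroup.mk ⟨g, hg⟩
    have hq : q.out⁻¹ * ⟨g, hg⟩ ∈ H.subgroupOf K := QuotientGroup.eq.mp (QuotientGroup.out_eq' q)
    exact ⟨q.out, ⟨q, rfl⟩, hq⟩

lemma infinite_inf_of_relIndex_ne_zero (h : H.relIndex K ≠ 0) (hK : (K : Set G).Infinite) :
    ((H ⊓ K : Subgroup G) : Set G).Infinite := by
  have hcard := Subgroup.relIndex_mul_relIndex ⊥ (H ⊓ K) K bot_le inf_le_right
  rw [Subgroup.inf_relIndex_right, Subgroup.relIndex_bot_left, Subgroup.relIndex_bot_left] at hcard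
  have : Infinite K := hK.to_subtype
  rw [Nat.card_eq_zero_of_infinite (α := K), mul_eq_zero, or_iff_left h] at hcard
  refine Set.infinite_coe_iff.mp ((Nat.card_eq_zero.mp hcard).resolve_left ?_)
  exact not_isEmpty_of_nonempty _

end FiniteIndex

/-! ### Points with infinite isotropy -/

instance : ContinuousConstSMul PSL3 P2 := ⟨continuous_pact⟩

/-- The set of points whose isotropy group in `Γ` is infinite, so that `L0 Γ` is its closure. -/
def infiniteIsotropy (Γ : Subgroup PSL3) : Set P2 :=
  {z | {γ : PSL3 | γ ∈ Γ ∧ pact γ z = z}.Infinite}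

lemma infiniteIsotropy_subset_L0 (Γ : Subgroup PSL3) : infiniteIsotropy Γ ⊆ L0 Γ := subset_closure

lemma infiniteIsotropy_eq_of_relIndex_ne_zero {H Γ : Subgroup PSL3} (hle : H ≤ Γ)
    (hrel : H.relIndex Γ ≠ 0) : infiniteIsotropy H = infiniteIsotropy Γ := by
  ext z
  refine ⟨fun hz => hz.mono fun γ hγ => ⟨hle hγ.1, hγ.2⟩, fun hz => ?_⟩
  have hrel' : H.relIndex (Γ ⊓ MulAction.stabilizer PSL3 z) ≠ 0 := fun h0 =>
    hrel (Subgroup.relIndex_eq_zero_of_le_right inf_le_left h0)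
  exact (infinite_inf_of_relIndex_ne_zero hrel' hz).mono fun γ hγ => ⟨hγ.1, hγ.2.2⟩

lemma smul_mem_infiniteIsotropy {Γ : Subgroup PSL3} {γ : PSL3} (hγ : γ ∈ Γ) {z : P2}
    (hz : z ∈ infiniteIsotropy Γ) : γ • z ∈ infiniteIsotropy Γ := by
  refine (hz.image (MulAut.conj γ).injective.injOn).mono ?_
  rintro _ ⟨g, ⟨hg, hgz⟩, rfl⟩
  refine ⟨Γ.mul_mem (Γ.mul_mem hγ hg) (Γ.inv_mem hγ), ?_⟩
  change g • z = z at hgz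
  change (γ * g * γ⁻¹) • γ • z = γ • z
  rw [mul_smul, inv_smul_smul, mul_smul, hgz]

/-! ### Cluster points and invariance of the domains -/

lemma orbitCluster_eq_setCluster_singleton (Γ : Subgroup PSL3) (z : P2) :
    orbitCluster Γ z = setCluster Γ {z} := by
  simp only [orbitCluster, setCluster, Set.image_singleton, Set.singleton_inter_nonempty]

lemma smul_mem_setCluster {Γ : Subgroup PSL3} {γ : PSL3} (hγ : γ ∈ Γ) {K : Set P2} {w : P2}
    (hw : w ∈ setCluster Γ K) : γ • w ∈ setCluster Γ K := by
  intro U hU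
  refine ((hw _ ((continuous_const_smul γ).continuousAt.preimage_mem_nhds hU)).image
    (mul_right_injective γ).injOn).mono ?_
  rintro _ ⟨g, ⟨hg, _, ⟨y, hy, rfl⟩, hgy⟩, rfl⟩
  exact ⟨Γ.mul_mem hγ hg, _, ⟨y, hy, mul_smul γ g y⟩, hgy⟩

lemma smul_mem_kulkarniLimit {Γ : Subgroup PSL3} {γ : PSL3} (hγ : γ ∈ Γ) {z : P2}
    (hz : z ∈ kulkarniLimit Γ) : γ • z ∈ kulkarniLimit Γ := by
  have hγc : Continuous fun x : P2 => γ • x := continuous_const_smul γ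
  refine hz.imp (Or.imp (fun h => ?_) fun h => ?_) fun h => ?_
  · exact Set.MapsTo.closure (fun x hx => smul_mem_infiniteIsotropy hγ hx) hγc h
  · refine Set.MapsTo.closure (fun x hx => ?_) hγc h
    simp only [orbitCluster_eq_setCluster_singleton, Set.mem_iUnion] at hx ⊢
    exact hx.imp fun y => Exists.imp fun _ => smul_mem_setCluster hγ
  · refine Set.MapsTo.closure (fun x hx => ?_) hγc h
    simp only [Set.mem_iUnion] at hx ⊢
    exact hx.imp fun K => Exists.imp fun _ => smul_mem_setCluster hγ

lemma smul_mem_eqSet {Γ : Subgroup PSL3} {γ : PSL3} (hγ : γ ∈ Γ) {z : P2} (hz : z ∈ eqSet Γ) :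
    γ • z ∈ eqSet Γ := by
  obtain ⟨U, hU, hzU, hcomp⟩ := hz
  have hγc : Continuous fun x : P2 => γ⁻¹ • x := continuous_const_smul γ⁻¹
  refine ⟨(γ⁻¹ • ·) ⁻¹' U, hU.preimage hγc, by rwa [Set.mem_preimage, inv_smul_smul], ?_⟩
  let pull : C(((γ⁻¹ • ·) ⁻¹' U : Set P2), U) :=
    ⟨fun x => ⟨γ⁻¹ • x.1, x.2⟩, (hγc.comp continuous_subtype_val).subtype_mk _⟩
  refine (hcomp.image (ContinuousMap.continuous_precomp (Z := P2) pull)).closure_of_subset ?_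
  rintro _ ⟨g, hg, rfl⟩
  refine ⟨(pactCM (g * γ)).restrict U, subset_closure ⟨g * γ, Γ.mul_mem hg hγ, rfl⟩, ?_⟩
  ext x
  change (g * γ) • γ⁻¹ • x.1 = g • x.1
  rw [mul_smul, smul_inv_smul]

/-- `Ω` is one of the domains attached to `Γ`: its equicontinuity set, its Kulkarni region, or a
maximal domain of proper discontinuity. -/
def IsDiscontinuityDomain (Γ : Subgroup PSL3) (Ω : Set P2) : Prop :=
  Ω = eqSet Γ ∨ Ω = kulkarniRegion Γ ∨ MaxDisc Γ Ω

lemma IsDiscontinuityDomain.smul_mem_compl {Γ : Subgroup PSL3} {Ω : Set P2}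
    (hΩ : IsDiscontinuityDomain Γ Ω) {γ : PSL3} (hγ : γ ∈ Γ) {z : P2} (hz : z ∈ Ωᶜ) :
    γ • z ∈ Ωᶜ := by
  rcases hΩ with rfl | rfl | hmax
  · intro h
    exact hz (inv_smul_smul γ z ▸ smul_mem_eqSet (Γ.inv_mem hγ) h)
  · rw [kulkarniRegion, compl_compl] at hz ⊢
    exact smul_mem_kulkarniLimit hγ hz
  · intro h
    refine hz (inv_smul_smul γ z ▸ ?_)
    rw [← hmax.1.2.2.1 γ⁻¹ (Γ.inv_mem hγ)]
    exact ⟨_, h, rfl⟩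

/-! ### Groups modelled on a compact set of matrices -/

/-- `Γ` acts properly on `U`: it moves only finitely often one compact subset of `U` so as to meet
another. Invariance of `U` is not part of the notion. -/
def ActsProperlyOn (Γ : Subgroup PSL3) (U : Set P2) : Prop :=
  ∀ K K' : Set P2, IsCompact K → IsCompact K' → K ⊆ U → K' ⊆ U →
    {γ : PSL3 | γ ∈ Γ ∧ ∃ x ∈ K, γ • x ∈ K'}.Finite

namespace ActsProperlyOn

variable {Γ : Subgroup PSL3} {U : Set P2}

lemma infiniteIsotropy_subset (h : ActsProperlyOn Γ U) : infiniteIsotropy Γ ⊆ Uᶜ := by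
  intro z hz hzU
  have hsub : ({z} : Set P2) ⊆ U := Set.singleton_subset_iff.mpr hzU
  refine hz ((h {z} {z} isCompact_singleton isCompact_singleton hsub hsub).subset ?_)
  rintro γ ⟨hγ, hγz⟩
  exact ⟨hγ, z, rfl, hγz⟩

lemma setCluster_subset (h : ActsProperlyOn Γ U) (hU : IsOpen U) {K : Set P2} (hK : IsCompact K)
    (hKU : K ⊆ U) : setCluster Γ K ⊆ Uᶜ := by
  intro w hw hwU
  obtain ⟨N, hN, hNU, hNc⟩ := local_compact_nhds (hU.mem_nhds hwU)
  refine hw N hN ((h K N hK hNc hKU hNU).subset ?_)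
  rintro γ ⟨hγ, _, ⟨x, hx, rfl⟩, hγx⟩
  exact ⟨hγ, x, hx, hγx⟩

lemma kulkarniLimit_subset (h : ActsProperlyOn Γ (infiniteIsotropy Γ)ᶜ)
    (hZ : IsClosed (infiniteIsotropy Γ)) : kulkarniLimit Γ ⊆ infiniteIsotropy Γ := by
  have hcluster {K : Set P2} (hK : IsCompact K) (hKL : K ⊆ (L0 Γ)ᶜ) :
      setCluster Γ K ⊆ infiniteIsotropy Γ := by
    rw [← compl_compl (infiniteIsotropy Γ)]
    exact h.setCluster_subset hZ.isOpen_compl hK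
      (hKL.trans (Set.compl_subset_compl.mpr (infiniteIsotropy_subset_L0 Γ)))
  refine Set.union_subset (Set.union_subset hZ.closure_subset ?_) ?_
  · refine closure_minimal (Set.iUnion₂_subset fun x hx => ?_) hZ
    rw [orbitCluster_eq_setCluster_singleton]
    exact hcluster isCompact_singleton (Set.singleton_subset_iff.mpr hx)
  · refine closure_minimal (Set.iUnion₂_subset fun K hK => hcluster hK.1 (hK.2.trans ?_)) hZ
    exact Set.compl_subset_compl.mpr Set.subset_union_left

lemma maxDisc_compl_subset (h : ActsProperlyOn Γ (infiniteIsotropy Γ)ᶜ)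
    (hZ : IsClosed (infiniteIsotropy Γ)) {Ω : Set P2} (hΩ : MaxDisc Γ Ω) :
    Ωᶜ ⊆ infiniteIsotropy Γ := by
  obtain ⟨⟨hne, -, -, hfin⟩, hmax⟩ := hΩ
  have hsub : Ω ⊆ (infiniteIsotropy Γ)ᶜ := by
    intro z hz hzZ
    refine hzZ ((hfin {z} (Set.singleton_subset_iff.mpr hz) isCompact_singleton).subset ?_)
    rintro γ ⟨hγ, hγz⟩
    exact ⟨hγ, z, ⟨z, rfl, hγz⟩, rfl⟩
  have hinv {γ : PSL3} (hγ : γ ∈ Γ) {z : P2} (hz : z ∈ (infiniteIsotropy Γ)ᶜ) :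
      γ • z ∈ (infiniteIsotropy Γ)ᶜ := fun hγz =>
    hz (inv_smul_smul γ z ▸ smul_mem_infiniteIsotropy (Γ.inv_mem hγ) hγz)
  have hproper : ActsPropDiscOn Γ (infiniteIsotropy Γ)ᶜ := by
    refine ⟨hne.mono hsub, hZ.isOpen_compl, fun γ hγ => ?_, fun K hKZ hK => ?_⟩
    · refine Set.Subset.antisymm (Set.image_subset_iff.mpr fun z hz => hinv hγ hz) fun z hz => ?_
      exact ⟨γ⁻¹ • z, hinv (Γ.inv_mem hγ) hz, smul_inv_smul γ z⟩
    · refine (h K K hK hK hKZ hKZ).subset ?_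
      rintro γ ⟨hγ, _, ⟨x, hx, rfl⟩, hγx⟩
      exact ⟨hγ, x, hx, hγx⟩
  rw [← hmax _ hproper hsub, compl_compl]

end ActsProperlyOn

/-- The group `H` is modelled off `Z` on the compact set `C` of matrices: each element of `H` has a
lift in `C`, and the limits of `H` off `Z` are the maps induced by the singular members of `C`,
which are to be defined on `Zᶜ` with values in `Z`. -/
structure IsCompactModel (H : Subgroup PSL3) (C : Set Mat3) (Z : Set P2) : Prop where
  isCompact : IsCompact C
  exists_lift : ∀ γ ∈ H, ∃ M ∈ C, IsLift γ M
  mulVec_ne_zero : ∀ M ∈ C, ∀ (v : V3) (hv : v ≠ 0),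
    Projectivization.mk ℂ v hv ∉ Z → M *ᵥ v ≠ 0
  mact_mem : ∀ M ∈ C, M.det = 0 → ∀ p ∉ Z, mact M p ∈ Z

namespace IsCompactModel

variable {H Γ : Subgroup PSL3} {C : Set Mat3} {Z : Set P2}

lemma continuousOn_mact (h : IsCompactModel H C Z) :
    ContinuousOn (fun x : Mat3 × P2 => mact x.1 x.2) (C ×ˢ Zᶜ) := by
  rintro ⟨M, p⟩ ⟨hM, hp⟩
  induction p using Projectivization.ind with
  | h v hv => exact (continuousAt_mact hv (h.mulVec_ne_zero M hM v hv hp)).continuousWithinAt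

/-- A closed cone of matrices, given here by linear parameters, becomes compact when its members
are normalised. -/
lemma exists_of_cone {V : Type*} [NormedAddCommGroup V] [NormedSpace ℂ V] [FiniteDimensional ℂ V]
    (Φ : V →ₗ[ℂ] Mat3) {T : Set V} (hT : IsClosed T) (hsmul : ∀ x ∈ T, ∀ c : ℂ, c • x ∈ T)
    (hlift : ∀ γ ∈ H, ∃ x ∈ T, IsLift γ (Φ x))
    (hlim : ∀ x ∈ T, x ≠ 0 → (Φ x).det = 0 → ∀ (v : V3) (hv : v ≠ 0),
      Projectivization.mk ℂ v hv ∉ Z →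
        ∃ h : Φ x *ᵥ v ≠ 0, Projectivization.mk ℂ (Φ x *ᵥ v) h ∈ Z) :
    ∃ C, IsCompactModel H C Z := by
  have : ProperSpace V := FiniteDimensional.proper ℂ V
  refine ⟨Φ '' (Metric.sphere 0 1 ∩ T), ?_, ?_, ?_, ?_⟩
  · exact ((isCompact_sphere 0 1).inter_right hT).image Φ.continuous_of_finiteDimensional
  · intro γ hγ
    obtain ⟨x, hx, hγx⟩ := hlift γ hγ
    have hx0 : x ≠ 0 := by
      rintro rfl
      exact hγx.det_ne_zero (by rw [map_zero, Matrix.det_zero])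
    have hc : ((‖x‖⁻¹ : ℝ) : ℂ) ≠ 0 := Complex.ofReal_ne_zero.mpr (by simpa using hx0)
    refine ⟨_, ⟨_, ⟨?_, hsmul x hx (‖x‖⁻¹ : ℝ)⟩, rfl⟩, ?_⟩
    · rw [mem_sphere_zero_iff_norm, norm_smul, Complex.norm_real, norm_inv, norm_norm,
        inv_mul_cancel₀ (norm_ne_zero_iff.mpr hx0)]
    · rw [map_smul]
      exact hγx.smul hc
  · rintro _ ⟨x, ⟨hx1, hx⟩, rfl⟩ v hv hvZ
    by_cases hdet : (Φ x).det = 0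
    · exact (hlim x hx (ne_zero_of_mem_unit_sphere ⟨x, hx1⟩) hdet v hv hvZ).1
    · exact fun h0 => hv (Matrix.eq_zero_of_mulVec_eq_zero hdet h0)
  · rintro _ ⟨x, ⟨hx1, hx⟩, rfl⟩ hdet p hp
    induction p using Projectivization.ind with
    | h v hv =>
      obtain ⟨hne, hmem⟩ := hlim x hx (ne_zero_of_mem_unit_sphere ⟨x, hx1⟩) hdet v hv hp
      rwa [mact_mk hv hne]

lemma actsProperlyOn [DiscreteTopology H] (h : IsCompactModel H C Z) : ActsProperlyOn H Zᶜ := by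
  intro K K' hK hK' hKZ hKZ'
  let T : Set (Mat3 × P2) := (C ×ˢ K) ∩ (fun x => mact x.1 x.2) ⁻¹' K'
  have hT : IsCompact T := (h.isCompact.prod hK).of_isClosed_subset
    ((h.continuousOn_mact.mono (Set.prod_mono le_rfl hKZ)).preimage_isClosed_of_isClosed
      (h.isCompact.prod hK).isClosed hK'.isClosed) Set.inter_subset_left
  refine (finite_setOf_exists_isLift_mem H (hT.image continuous_fst) ?_).subset ?_
  · rintro _ ⟨⟨M, p⟩, ⟨⟨hM, hp⟩, hMp⟩, rfl⟩ hdet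
    exact hKZ' hMp (h.mact_mem M hM hdet p (hKZ hp))
  · rintro γ ⟨hγ, x, hx, hγx⟩
    obtain ⟨M, hM, hlift⟩ := h.exists_lift γ hγ
    rw [hlift.smul_eq_mact] at hγx
    exact ⟨hγ, M, ⟨(M, x), ⟨⟨hM, hx⟩, hγx⟩, rfl⟩, hlift⟩

lemma compl_subset_eqSet (h : IsCompactModel Γ C Z) (hZ : IsClosed Z) : Zᶜ ⊆ eqSet Γ := by
  intro z hz
  refine ⟨Zᶜ, hZ.isOpen_compl, hz, ?_⟩
  let Φ : C(C × (Zᶜ : Set P2), P2) := ⟨fun x => mact x.1.1 x.2.1,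
    h.continuousOn_mact.comp_continuous
      ((continuous_subtype_val.comp continuous_fst).prodMk
        (continuous_subtype_val.comp continuous_snd)) fun x => ⟨x.1.2, x.2.2⟩⟩
  have : CompactSpace C := isCompact_iff_compactSpace.mp h.isCompact
  refine (isCompact_range Φ.curry.continuous).closure_of_subset ?_
  rintro _ ⟨γ, hγ, rfl⟩
  obtain ⟨M, hM, hlift⟩ := h.exists_lift γ hγ
  refine ⟨⟨M, hM⟩, ?_⟩
  ext x
  exact (hlift.smul_eq_mact x.1).symm

lemma exists_of_relIndex_ne_zero (h : IsCompactModel H C Z) (hrel : H.relIndex Γ ≠ 0)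
    (hZ : ∀ γ ∈ Γ, ∀ z ∈ Z, γ • z ∈ Z) : ∃ C', IsCompactModel Γ C' Z := by
  obtain ⟨F, hF, hFΓ, hcover⟩ := exists_finite_transversal hrel
  choose lift hlift using exists_isLift
  refine ⟨⋃ f ∈ F, (lift f * ·) '' C, ?_, fun γ hγ => ?_, ?_, ?_⟩
  · exact hF.isCompact_biUnion fun f _ => h.isCompact.image (by fun_prop)
  · obtain ⟨f, hf, hfγ⟩ := hcover γ hγ
    obtain ⟨M, hM, hM'⟩ := h.exists_lift _ hfγ
    exact ⟨lift f * M, Set.mem_biUnion hf ⟨M, hM, rfl⟩,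
      by simpa only [mul_inv_cancel_left] using (hlift f).mul hM'⟩
  · simp only [Set.mem_iUnion]
    rintro _ ⟨f, -, M, hM, rfl⟩ v hv hvZ
    rw [← Matrix.mulVec_mulVec]
    exact (hlift f).mulVec_ne_zero (h.mulVec_ne_zero M hM v hv hvZ)
  · simp only [Set.mem_iUnion]
    rintro _ ⟨f, hf, M, hM, rfl⟩ hdet p hp
    have hdetM : M.det = 0 := by
      rw [Matrix.det_mul] at hdet
      exact (mul_eq_zero.mp hdet).resolve_left (hlift f).det_ne_zero
    induction p using Projectivization.ind with
    | h v hv =>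
      rw [(hlift f).mact_mul hv (h.mulVec_ne_zero M hM v hv hp)]
      exact hZ f (hFΓ hf) _ (h.mact_mem M hM hdetM _ hp)

lemma compl_subset [DiscreteTopology Γ] (h : IsCompactModel H C Z) (hle : H ≤ Γ)
    (hrel : H.relIndex Γ ≠ 0) (hZ : IsClosed Z) (hiso : Z ⊆ infiniteIsotropy H) {Ω : Set P2}
    (hΩ : IsDiscontinuityDomain Γ Ω) : Ωᶜ ⊆ Z := by
  have : DiscreteTopology H := DiscreteTopology.of_subset ‹_› hle
  have hZeq : Z = infiniteIsotropy Γ := by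
    rw [← infiniteIsotropy_eq_of_relIndex_ne_zero hle hrel]
    exact hiso.antisymm (compl_compl Z ▸ h.actsProperlyOn.infiniteIsotropy_subset)
  subst hZeq
  obtain ⟨C', h'⟩ := h.exists_of_relIndex_ne_zero hrel fun γ hγ z => smul_mem_infiniteIsotropy hγ
  rcases hΩ with rfl | rfl | hmax
  · exact Set.compl_subset_comm.mp (h'.compl_subset_eqSet hZ)
  · rw [kulkarniRegion, compl_compl]
    exact h'.actsProperlyOn.kulkarniLimit_subset hZ
  · exact h'.actsProperlyOn.maxDisc_compl_subset hZ hmax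

end IsCompactModel

/-! ### Lines -/

lemma mk_submodule_le_iff {v : V3} (hv : v ≠ 0) {W : Submodule ℂ V3} :
    (Projectivization.mk ℂ v hv : P2).submodule ≤ W ↔ v ∈ W := by
  rw [Projectivization.submodule_mk, Submodule.span_singleton_le_iff_mem]

section Hyperplane

variable {K n : Type*} [Field K] [Fintype n] {W : Submodule K (n → K)}

lemma dotProduct_eq_zero_iff_mem (hW : Module.finrank K W + 1 = Fintype.card n) {χ : n → K}
    (hχ : χ ≠ 0) (h : ∀ x ∈ W, χ ⬝ᵥ x = 0) (x : n → K) : χ ⬝ᵥ x = 0 ↔ x ∈ W := by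
  classical
  let f : Module.Dual K (n → K) := dotProductEquiv K n χ
  have hf : f ≠ 0 := (LinearEquiv.map_ne_zero_iff _).mpr hχ
  have hrank := Module.Dual.finrank_ker_add_one_of_ne_zero hf
  rw [Module.finrank_fintype_fun_eq_card] at hrank
  rw [Submodule.eq_of_le_of_finrank_eq (S₂ := LinearMap.ker f) h (by lia)]
  exact Iff.rfl

lemma exists_dotProduct_eq_zero_iff_mem (hW : Module.finrank K W + 1 = Fintype.card n) :
    ∃ φ : n → K, φ ≠ 0 ∧ ∀ x, φ ⬝ᵥ x = 0 ↔ x ∈ W := by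
  classical
  have hWtop : W < ⊤ := lt_top_iff_ne_top.mpr <| by
    rintro rfl
    rw [finrank_top, Module.finrank_fintype_fun_eq_card] at hW
    lia
  obtain ⟨f, hf, hWf⟩ := W.exists_le_ker_of_lt_top hWtop
  obtain ⟨φ, rfl⟩ := (dotProductEquiv K n).surjective f
  have hφ : φ ≠ 0 := (LinearEquiv.map_ne_zero_iff _).mp hf
  exact ⟨φ, hφ, dotProduct_eq_zero_iff_mem hW hφ fun x hx => hWf hx⟩

end Hyperplane

lemma isClosed_setOf_submodule_le (W : Submodule ℂ V3) : IsClosed {p : P2 | p.submodule ≤ W} := by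
  rw [← isOpenQuotientMap_mk.isQuotientMap.isClosed_preimage]
  suffices (fun v : {v : V3 // v ≠ 0} => (Projectivization.mk ℂ v.1 v.2 : P2)) ⁻¹'
      {p : P2 | p.submodule ≤ W} = Subtype.val ⁻¹' (W : Set V3) by
    rw [this]
    exact (Submodule.closed_of_finiteDimensional W).preimage continuous_subtype_val
  ext v
  exact mk_submodule_le_iff v.2

lemma encard_pair_le_two {α : Type*} (a b : α) : ({a, b} : Set α).encard ≤ 2 := by
  have h := Set.encard_insert_le {b} a
  rwa [Set.encard_singleton, one_add_one_eq_two] at h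

lemma Li_le_two_of_submodule_le {Ω : Set P2} {W₁ W₂ : Submodule ℂ V3} (h₁ : W₁ ≠ ⊤) (h₂ : W₂ ≠ ⊤)
    (h : ∀ p ∈ Ωᶜ, p.submodule ≤ W₁ ∨ p.submodule ≤ W₂) : Li Ω ≤ 2 := by
  have heq {W W' : Submodule ℂ V3} (hW : Module.finrank ℂ W = 2) (hle : W ≤ W') (hW' : W' ≠ ⊤) :
      W = W' := by
    have hlt := Submodule.finrank_lt hW'
    rw [Module.finrank_fin_fun] at hlt
    exact Submodule.eq_of_le_of_finrank_le hle (by lia)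
  suffices linesIn Ωᶜ ⊆ {{p | p.submodule ≤ W₁}, {p | p.submodule ≤ W₂}} from
    (Set.encard_le_encard this).trans (encard_pair_le_two _ _)
  rintro _ ⟨⟨W, hW, rfl⟩, hWΩ⟩
  have hcover : (W : Set V3) ⊆ W₁ ∪ W₂ := by
    intro v hv
    rcases eq_or_ne v 0 with rfl | hv0
    · exact Or.inl W₁.zero_mem
    · simpa only [mk_submodule_le_iff, Set.mem_union, SetLike.mem_coe] using
        h _ (hWΩ ((mk_submodule_le_iff hv0).mpr hv))
  rcases AddSubgroupClass.subset_union.mp hcover with hle | hle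
  · exact Or.inl (by rw [heq hW hle h₁])
  · exact Or.inr (by rw [heq hW hle h₂]; rfl)

namespace IsLine

variable {ℓ ℓ₁ ℓ₂ : Set P2}

lemma exists_inter_eq_singleton (h₁ : IsLine ℓ₁) (h₂ : IsLine ℓ₂) (hne : ℓ₁ ≠ ℓ₂) :
    ∃ x, ℓ₁ ∩ ℓ₂ = {x} := by
  obtain ⟨W₁, hW₁, rfl⟩ := h₁
  obtain ⟨W₂, hW₂, rfl⟩ := h₂
  have hlt : W₁ < W₁ ⊔ W₂ := by
    refine left_lt_sup.mpr fun hle => hne ?_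
    rw [Submodule.eq_of_le_of_finrank_eq hle (hW₂.trans hW₁.symm)]
  have hrank : Module.finrank ℂ (W₁ ⊓ W₂ : Submodule ℂ V3) = 1 := by
    have hlt := Submodule.finrank_lt_finrank_of_lt hlt
    have hle := Submodule.finrank_le (W₁ ⊔ W₂)
    have hadd := Submodule.finrank_sup_add_finrank_inf_eq W₁ W₂
    rw [Module.finrank_fin_fun] at hle
    lia
  refine ⟨Projectivization.mk'' (W₁ ⊓ W₂) hrank, Set.eq_singleton_iff_unique_mem.mpr ⟨?_, ?_⟩⟩
  · simp only [Set.mem_inter_iff, Set.mem_ofPred_eq, Projectivization.submodule_mk'', inf_le_left,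
      inf_le_right, and_self]
  · rintro p ⟨hp₁, hp₂⟩
    apply Projectivization.submodule_injective
    rw [Projectivization.submodule_mk'']
    exact Submodule.eq_of_le_of_finrank_eq (le_inf hp₁ hp₂)
      (by rw [Projectivization.finrank_submodule, hrank])

lemma eq_of_mem_of_mem (h₁ : IsLine ℓ₁) (h₂ : IsLine ℓ₂) {x y : P2} (hxy : x ≠ y) (hx₁ : x ∈ ℓ₁)
    (hx₂ : x ∈ ℓ₂) (hy₁ : y ∈ ℓ₁) (hy₂ : y ∈ ℓ₂) : ℓ₁ = ℓ₂ := by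
  by_contra hne
  obtain ⟨z, hz⟩ := h₁.exists_inter_eq_singleton h₂ hne
  have hx : x ∈ ({z} : Set P2) := hz ▸ ⟨hx₁, hx₂⟩
  have hy : y ∈ ({z} : Set P2) := hz ▸ ⟨hy₁, hy₂⟩
  exact hxy (hx.trans hy.symm)

lemma exists_dotProduct_eq_zero_iff (h : IsLine ℓ) :
    ∃ φ : V3, ∀ x (hx : x ≠ 0), Projectivization.mk ℂ x hx ∈ ℓ ↔ φ ⬝ᵥ x = 0 := by
  obtain ⟨W, hW, rfl⟩ := h
  obtain ⟨φ, -, hφ⟩ := exists_dotProduct_eq_zero_iff_mem (W := W) (by rw [hW, Fintype.card_fin])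
  exact ⟨φ, fun x hx => (mk_submodule_le_iff hx).trans (hφ x).symm⟩

lemma exists_dotProduct_eq_one (h : IsLine ℓ) {v : V3} (hv : v ≠ 0)
    (hvℓ : Projectivization.mk ℂ v hv ∉ ℓ) :
    ∃ φ : V3, φ ⬝ᵥ v = 1 ∧ ∀ x (hx : x ≠ 0), Projectivization.mk ℂ x hx ∈ ℓ ↔ φ ⬝ᵥ x = 0 := by
  obtain ⟨φ, hφ⟩ := h.exists_dotProduct_eq_zero_iff
  have hφv : φ ⬝ᵥ v ≠ 0 := (hφ v hv).not.mp hvℓ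
  refine ⟨(φ ⬝ᵥ v)⁻¹ • φ, by rw [smul_dotProduct, smul_eq_mul, inv_mul_cancel₀ hφv],
    fun x hx => ?_⟩
  rw [hφ, smul_dotProduct, smul_eq_zero_iff_right (inv_ne_zero hφv)]

end IsLine

lemma IsLift.submodule_smul {γ : PSL3} {M : Mat3} (h : IsLift γ M) (p : P2) :
    (γ • p).submodule = p.submodule.map M.mulVecLin := by
  induction p using Projectivization.ind with
  | h v hv =>
    rw [h.smul_mk, Projectivization.submodule_mk, Projectivization.submodule_mk,
      Submodule.map_span, Set.image_singleton, Matrix.mulVecLin_apply]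

open scoped Pointwise

lemma IsLine.smul {ℓ : Set P2} (h : IsLine ℓ) (γ : PSL3) : IsLine (γ • ℓ) := by
  obtain ⟨W, hW, rfl⟩ := h
  obtain ⟨M, hM⟩ := exists_isLift γ
  have hinj : Function.Injective M.mulVecLin :=
    Matrix.mulVec_injective_of_isUnit ((Matrix.isUnit_iff_isUnit_det M).mpr hM.det_ne_zero.isUnit)
  refine ⟨W.map M.mulVecLin, (W.equivMapOfInjective _ hinj).finrank_eq.symm.trans hW, ?_⟩
  ext p
  obtain ⟨q, rfl⟩ := MulAction.surjective γ p
  rw [Set.smul_mem_smul_set_iff, Set.mem_ofPred_eq, Set.mem_ofPred_eq, hM.submodule_smul,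
    Submodule.map_le_map_iff_of_injective hinj]

/-! ### Maximal families of lines in general position -/

/-- The points lying on infinitely many lines of the complement of `Ω`. -/
def manyLines (Ω : Set P2) : Set P2 := {p | {m ∈ linesIn Ωᶜ | p ∈ m}.Infinite}

/-- The lines of the complement of `Ω` through no point of `manyLines Ω`. -/
def sporadicLines (Ω : Set P2) : Set (Set P2) := {m ∈ linesIn Ωᶜ | Disjoint m (manyLines Ω)}

/-- The pairwise intersection points of the lines of `L`. -/
def crossings (L : Set (Set P2)) : Set P2 :=
  {x | ∃ ℓ₁ ∈ L, ∃ ℓ₂ ∈ L, ℓ₁ ≠ ℓ₂ ∧ ℓ₁ ∩ ℓ₂ = {x}}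

lemma crossings_finite {L : Set (Set P2)} (hfin : L.Finite) : (crossings L).Finite := by
  have hsub : crossings L ⊆ ⋃ ℓ₁ ∈ L, ⋃ ℓ₂ ∈ L, {x | ℓ₁ ∩ ℓ₂ = {x}} := by
    rintro x ⟨ℓ₁, h₁, ℓ₂, h₂, -, hx⟩
    exact Set.mem_biUnion h₁ (Set.mem_biUnion h₂ hx)
  refine (hfin.biUnion fun ℓ₁ _ => hfin.biUnion fun ℓ₂ _ => Set.Subsingleton.finite ?_).subset hsub
  intro x hx y hy
  exact Set.singleton_injective (hx.symm.trans hy)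

lemma mem_crossings {L : Set (Set P2)} (hL : ∀ ℓ ∈ L, IsLine ℓ) {ℓ₁ ℓ₂ : Set P2} (h₁ : ℓ₁ ∈ L)
    (h₂ : ℓ₂ ∈ L) (hne : ℓ₁ ≠ ℓ₂) {p : P2} (hp₁ : p ∈ ℓ₁) (hp₂ : p ∈ ℓ₂) : p ∈ crossings L := by
  obtain ⟨x, hx⟩ := (hL _ h₁).exists_inter_eq_singleton (hL _ h₂) hne
  have hpx : p ∈ ({x} : Set P2) := hx ▸ ⟨hp₁, hp₂⟩
  obtain rfl : p = x := hpx
  exact ⟨ℓ₁, h₁, ℓ₂, h₂, hne, hx⟩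

/-- At most two lines of a family in general position pass through a given point. -/
lemma exists_two_lines_avoiding {L : Set (Set P2)} (hL : InGenPos L) (h4 : 4 ≤ L.encard) (v : P2) :
    ∃ m₁ ∈ L, ∃ m₂ ∈ L, m₁ ≠ m₂ ∧ v ∉ m₁ ∧ v ∉ m₂ := by
  have hthrough : (L ∩ {m | v ∈ m}).encard ≤ 2 := by
    by_cases h : 1 < (L ∩ {m | v ∈ m}).encard
    · obtain ⟨a, b, ha, hb, hab⟩ := Set.one_lt_encard_iff.mp h
      refine (Set.encard_le_encard fun m hm => ?_).trans (encard_pair_le_two a b)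
      rcases hL v a ha.1 b hb.1 m hm.1 ha.2 hb.2 hm.2 with h | h | h
      · exact (hab h).elim
      · exact Or.inl h.symm
      · exact Or.inr h.symm
    · exact (not_lt.mp h).trans one_le_two
  have havoid : 1 < (L \ {m | v ∈ m}).encard := by
    by_contra! h
    have hle : L.encard ≤ 1 + 2 :=
      Set.encard_sdiff_add_encard_inter L {m | v ∈ m} ▸ add_le_add h hthrough
    exact absurd (h4.trans hle) (by norm_num)
  obtain ⟨a, b, ha, hb, hab⟩ := Set.one_lt_encard_iff.mp havoid
  exact ⟨a, ha.1, b, hb.1, hab, ha.2, hb.2⟩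

lemma maximal_genFamilies_of_encard_eq_LiG {Ω : Set P2} {L : Set (Set P2)}
    (hL : L ∈ genFamilies Ω) (hcard : L.encard = LiG Ω) (hfin : L.Finite) :
    Maximal (· ∈ genFamilies Ω) L := by
  refine maximal_iff.mpr ⟨hL, fun L' hL' hsub => ?_⟩
  have hle : L'.encard ≤ L.encard := hcard ▸ le_iSup₂ (f := fun L _ => Set.encard L) L' hL'
  exact hfin.eq_of_subset_of_encard_le hsub hle

section MaximalFamily

variable {Ω : Set P2} {L : Set (Set P2)}

lemma exists_mem_crossings (hL : Maximal (· ∈ genFamilies Ω) L) (hnt : L.Nontrivial) {m : Set P2}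
    (hm : m ∈ linesIn Ωᶜ) : ∃ x ∈ crossings L, x ∈ m := by
  have hlines : ∀ ℓ ∈ L, IsLine ℓ := fun ℓ hℓ => (hL.prop.1 ℓ hℓ).1
  by_cases hmL : m ∈ L
  · obtain ⟨ℓ, hℓ, hne⟩ := hnt.exists_ne m
    obtain ⟨x, hx⟩ := (hlines ℓ hℓ).exists_inter_eq_singleton hm.1 hne
    exact ⟨x, ⟨ℓ, hℓ, m, hmL, hne, hx⟩, (hx ▸ rfl : x ∈ ℓ ∩ m).2⟩
  have hnot : ¬ InGenPos (insert m L) := fun hgp =>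
    hmL (hL.mem_of_prop_insert ⟨Set.forall_mem_insert.mpr ⟨hm, hL.prop.1⟩, hgp⟩)
  rw [InGenPos] at hnot
  push Not at hnot
  obtain ⟨p, a, ha, b, hb, c, hc, hpa, hpb, hpc, hab, hac, hbc⟩ := hnot
  have hnotL : ¬ (a ∈ L ∧ b ∈ L ∧ c ∈ L) := fun ⟨ha, hb, hc⟩ => by
    simpa only [hab, hac, hbc, or_self] using hL.prop.2 p a ha b hb c hc hpa hpb hpc
  rcases ha with rfl | ha
  · have hb := hb.resolve_left hab.symm
    have hc := hc.resolve_left hac.symm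
    exact ⟨p, mem_crossings hlines hb hc hbc hpb hpc, hpa⟩
  rcases hb with rfl | hb
  · exact ⟨p, mem_crossings hlines ha (hc.resolve_left hbc.symm) hac hpa hpc, hpb⟩
  rcases hc with rfl | hc
  · exact ⟨p, mem_crossings hlines ha hb hab hpa hpb, hpc⟩
  · exact (hnotL ⟨ha, hb, hc⟩).elim

lemma manyLines_subset_crossings (hL : Maximal (· ∈ genFamilies Ω) L) (hnt : L.Nontrivial)
    (hfin : L.Finite) : manyLines Ω ⊆ crossings L := by
  intro v hv
  by_contra hvX
  have hsub : {m ∈ linesIn Ωᶜ | v ∈ m} ⊆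
      ⋃ x ∈ crossings L, {m | IsLine m ∧ v ∈ m ∧ x ∈ m ∧ x ≠ v} := by
    rintro m ⟨hm, hvm⟩
    obtain ⟨x, hx, hxm⟩ := exists_mem_crossings hL hnt hm
    exact Set.mem_biUnion hx ⟨hm.1, hvm, hxm, fun h => hvX (h ▸ hx)⟩
  refine hv (((crossings_finite hfin).biUnion fun x _ => Set.Subsingleton.finite ?_).subset hsub)
  rintro a ⟨ha, hva, hxa, hne⟩ b ⟨hb, hvb, hxb, -⟩
  exact ha.eq_of_mem_of_mem hb hne hxa hxb hva hvb

lemma isVertex_of_mem_manyLines (hL : Maximal (· ∈ genFamilies Ω) L) (hnt : L.Nontrivial)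
    (hfin : L.Finite) {v : P2} (hv : v ∈ manyLines Ω) : IsVertex Ω L v := by
  obtain ⟨ℓ₁, h₁, ℓ₂, h₂, hne, hx⟩ := manyLines_subset_crossings hL hnt hfin hv
  refine ⟨ℓ₁, h₁, ℓ₂, h₂, hne, {m ∈ linesIn Ωᶜ | v ∈ m}, hv, fun ℓ hℓ => hℓ.1, ?_⟩
  rw [hx, Set.inter_eq_left, Set.singleton_subset_iff]
  exact fun m hm => hm.2

lemma finite_sporadicLines (hL : Maximal (· ∈ genFamilies Ω) L) (hnt : L.Nontrivial)
    (hfin : L.Finite) : (sporadicLines Ω).Finite := by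
  have hsub : sporadicLines Ω ⊆
      ⋃ x ∈ crossings L \ manyLines Ω, {m ∈ linesIn Ωᶜ | x ∈ m} := by
    rintro m ⟨hm, hdisj⟩
    obtain ⟨x, hx, hxm⟩ := exists_mem_crossings hL hnt hm
    exact Set.mem_biUnion ⟨hx, Set.disjoint_left.mp hdisj hxm⟩ ⟨hm, hxm⟩
  exact ((crossings_finite hfin).sdiff.biUnion fun x hx => Set.not_infinite.mp hx.2).subset hsub

end MaximalFamily

section Invariance

variable {Γ : Subgroup PSL3} {Ω : Set P2}

lemma smul_mem_linesIn (hΩ : IsDiscontinuityDomain Γ Ω) {γ : PSL3} (hγ : γ ∈ Γ) {m : Set P2}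
    (hm : m ∈ linesIn Ωᶜ) : γ • m ∈ linesIn Ωᶜ := by
  refine ⟨hm.1.smul γ, ?_⟩
  rintro _ ⟨x, hx, rfl⟩
  exact hΩ.smul_mem_compl hγ (hm.2 hx)

lemma smul_mem_manyLines (hΩ : IsDiscontinuityDomain Γ Ω) {γ : PSL3} (hγ : γ ∈ Γ) {v : P2}
    (hv : v ∈ manyLines Ω) : γ • v ∈ manyLines Ω := by
  refine (hv.image (MulAction.injective γ).injOn).mono ?_
  rintro _ ⟨m, ⟨hm, hvm⟩, rfl⟩
  exact ⟨smul_mem_linesIn hΩ hγ hm, Set.smul_mem_smul_set hvm⟩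

lemma smul_mem_sporadicLines (hΩ : IsDiscontinuityDomain Γ Ω) {γ : PSL3} (hγ : γ ∈ Γ)
    {m : Set P2} (hm : m ∈ sporadicLines Ω) : γ • m ∈ sporadicLines Ω := by
  refine ⟨smul_mem_linesIn hΩ hγ hm.1, Set.disjoint_left.mpr ?_⟩
  rintro _ ⟨x, hx, rfl⟩ hγx
  have hxmany : γ⁻¹ • γ • x ∈ manyLines Ω := smul_mem_manyLines hΩ (Γ.inv_mem hγ) hγx
  rw [inv_smul_smul] at hxmany
  exact Set.disjoint_left.mp hm.2 hx hxmany

end Invariance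

/-! ### Groups of affine type -/

section CircleGroup

variable {𝕜 E : Type*} [NormedField 𝕜] [AddCommGroup E] [Module 𝕜 E]

/-- `S` is a group for the operation `(u, u') ↦ u + u' + τ u' • u`, that is, the maps
`x ↦ x + τ x • u` with `u ∈ S` form a group under composition. -/
structure IsCircleGroup (τ : E →ₗ[𝕜] 𝕜) (S : Set E) : Prop where
  one_add_ne_zero : ∀ u ∈ S, 1 + τ u ≠ 0
  mul_mem : ∀ u ∈ S, ∀ u' ∈ S, u + u' + τ u' • u ∈ S
  inv_mem : ∀ u ∈ S, -((1 + τ u)⁻¹ • u) ∈ S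

namespace IsCircleGroup

variable {τ : E →ₗ[𝕜] 𝕜} {S : Set E} {g u u' : E}

lemma map_inv (h : IsCircleGroup τ S) (hu : u ∈ S) :
    τ (-((1 + τ u)⁻¹ • u)) = (1 + τ u)⁻¹ - 1 := by
  have := h.one_add_ne_zero u hu
  rw [map_neg, map_smul, smul_eq_mul]
  field_simp
  ring

lemma conj_mem (h : IsCircleGroup τ S) (hg : g ∈ S) (hu : u ∈ S) :
    (1 + τ g)⁻¹ • (u + τ u • g) ∈ S := by
  convert h.mul_mem _ (h.mul_mem g hg u hu) _ (h.inv_mem g hg) using 1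
  rw [h.map_inv hg]
  module

lemma smul_sub_mem (h : IsCircleGroup τ S) (hu : u ∈ S) (hu' : u' ∈ S) :
    (1 + τ u)⁻¹ • (u' - u) ∈ S := by
  convert h.mul_mem u' hu' _ (h.inv_mem u hu) using 1
  rw [h.map_inv hu]
  module

/-- Conjugating by `g` fixes `τ u` and divides the component of `u` in `ker τ`, taken along `g`,
by `1 + τ g`. -/
lemma smul_add_pow_smul_mem (h : IsCircleGroup τ S) (hg : g ∈ S) (hτg : τ g ≠ 0) (hu : u ∈ S)
    (n : ℕ) :
    (τ u / τ g) • g + ((1 + τ g)⁻¹) ^ n • (u - (τ u / τ g) • g) ∈ S := by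
  induction n with
  | zero => simpa only [pow_zero, one_smul, add_sub_cancel] using hu
  | succ n ih =>
    have hδ : τ (u - (τ u / τ g) • g) = 0 := by
      rw [map_sub, map_smul, smul_eq_mul, div_mul_cancel₀ _ hτg, sub_self]
    have hcoef : (1 + τ g)⁻¹ * (τ u / τ g + τ u) = τ u / τ g := by
      have := h.one_add_ne_zero g hg
      field_simp
    convert h.conj_mem hg ih using 1
    rw [map_add, map_smul, map_smul, hδ, smul_zero, add_zero, smul_eq_mul,
      div_mul_cancel₀ _ hτg, add_right_comm, ← add_smul, smul_add, smul_smul, smul_smul, hcoef,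
      pow_succ']

variable [ProperSpace 𝕜] [TopologicalSpace E] [ContinuousAdd E] [ContinuousSMul 𝕜 E]

lemma eq_div_smul_of_one_lt_norm (h : IsCircleGroup τ S)
    (hdisc : ∀ (κ : 𝕜) (K : Set E), IsCompact K → {u ∈ S | τ u = κ ∧ u ∈ K}.Finite)
    (hg : g ∈ S) (hnorm : 1 < ‖1 + τ g‖) (hu : u ∈ S) : u = (τ u / τ g) • g := by
  have hτg : τ g ≠ 0 := by
    intro h0
    simp [h0] at hnorm
  by_contra hne
  have hδ : u - (τ u / τ g) • g ≠ 0 := sub_ne_zero.mpr hne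
  have hlt : ‖(1 + τ g)⁻¹‖ < 1 := by
    rw [norm_inv]
    exact inv_lt_one_of_one_lt₀ hnorm
  let curve (c : 𝕜) : E := (τ u / τ g) • g + c • (u - (τ u / τ g) • g)
  have hcurve : Function.Injective curve :=
    (add_right_injective _).comp (smul_left_injective 𝕜 hδ)
  have hpow : Function.Injective fun n : ℕ => (1 + τ g)⁻¹ ^ n := by
    refine fun m n hmn => pow_right_injective₀ (norm_pos_iff.mpr ?_) hlt.ne ?_
    · exact inv_ne_zero (h.one_add_ne_zero g hg)
    · simpa only [norm_pow] using congrArg norm hmn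
  have hK : IsCompact (curve '' Metric.closedBall 0 1) :=
    (isCompact_closedBall 0 1).image (by fun_prop)
  refine (Set.infinite_range_of_injective (hcurve.comp hpow)).mono ?_ (hdisc (τ u) _ hK)
  rintro _ ⟨n, rfl⟩
  refine ⟨h.smul_add_pow_smul_mem hg hτg hu n, ?_, _, ?_, rfl⟩
  · simp only [curve, Function.comp_apply, map_add, map_smul, map_sub, smul_eq_mul,
      div_mul_cancel₀ _ hτg, sub_self, mul_zero, add_zero]
  · rw [mem_closedBall_zero_iff, norm_pow]
    exact pow_le_one₀ (norm_nonneg _) hlt.le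

/-- If no element of `S` is expanding and `S` is not contained in a line, then the commutators of
`S` give a nonzero element of `ker τ`. -/
theorem isometric_or_exists_eq_smul (h : IsCircleGroup τ S)
    (hdisc : ∀ (κ : 𝕜) (K : Set E), IsCompact K → {u ∈ S | τ u = κ ∧ u ∈ K}.Finite)
    (hnt : ∃ u ∈ S, u ≠ 0) :
    ((∀ u ∈ S, ‖1 + τ u‖ = 1) ∧ ∃ u ∈ S, u ≠ 0 ∧ τ u = 0) ∨
      ∃ g ∈ S, τ g ≠ 0 ∧ ∀ u ∈ S, u = (τ u / τ g) • g := by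
  by_cases hexp : ∃ g ∈ S, 1 < ‖1 + τ g‖
  · obtain ⟨g, hg, hnorm⟩ := hexp
    refine Or.inr ⟨g, hg, ?_, fun u hu => h.eq_div_smul_of_one_lt_norm hdisc hg hnorm hu⟩
    intro h0
    simp [h0] at hnorm
  push Not at hexp
  have hiso (u : E) (hu : u ∈ S) : ‖1 + τ u‖ = 1 := by
    refine (hexp u hu).antisymm ?_
    have hinv := hexp _ (h.inv_mem u hu)
    rw [h.map_inv hu, add_sub_cancel, norm_inv] at hinv
    exact (inv_le_one₀ (norm_pos_iff.mpr (h.one_add_ne_zero u hu))).mp hinv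
  by_cases helation : ∃ u ∈ S, u ≠ 0 ∧ τ u = 0
  · exact Or.inl ⟨hiso, helation⟩
  push Not at helation
  obtain ⟨g, hg, hg0⟩ := hnt
  have hτg : τ g ≠ 0 := helation g hg hg0
  refine Or.inr ⟨g, hg, hτg, fun u hu => ?_⟩
  have hcomm : u = (1 + τ g)⁻¹ • (u + τ u • g) := by
    have hτ : τ u = τ ((1 + τ g)⁻¹ • (u + τ u • g)) := by
      have := h.one_add_ne_zero g hg
      simp only [map_smul, map_add, smul_eq_mul]
      field_simp
    by_contra hne
    refine helation _ (h.smul_sub_mem hu (h.conj_mem hg hu)) (smul_ne_zero ?_ ?_) ?_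
    · exact inv_ne_zero (h.one_add_ne_zero u hu)
    · exact sub_ne_zero.mpr (Ne.symm hne)
    · rw [map_smul, map_sub, ← hτ, sub_self, smul_zero]
  rw [eq_inv_smul_iff₀ (h.one_add_ne_zero g hg), add_smul, one_smul, add_right_inj] at hcomm
  rw [div_eq_inv_mul, mul_smul, ← hcomm, inv_smul_smul₀ hτg]

end IsCircleGroup

end CircleGroup

/-! ### Groups of perspectivities -/

section PerspectivitySpace

variable {K n : Type*} [Field K] [Fintype n]

/-- A space of matrices of rank at most one with a common kernel or with a common image, described
through its products: `1 + N` with `N ∈ 𝒩` is then, when invertible, a perspectivity, and the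
perspectivities so obtained share their axis or their centre. -/
def IsPerspectivitySpace (𝒩 : Submodule K (Matrix n n K)) : Prop :=
  ∀ N ∈ 𝒩, ∀ N' ∈ 𝒩, N * N' = N'.trace • N ∨ N' * N = N'.trace • N

namespace IsPerspectivitySpace

variable {𝒩 : Submodule K (Matrix n n K)} {N : Matrix n n K}

lemma mul_self (h : IsPerspectivitySpace 𝒩) (hN : N ∈ 𝒩) : N * N = N.trace • N :=
  (or_self_iff).mp (h N hN N hN)

variable [DecidableEq n]

lemma smul_one_add_mul (h : IsPerspectivitySpace 𝒩) (hN : N ∈ 𝒩) (s : K) :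
    (s • 1 + N) * ((s + N.trace) • 1 - N) = (s * (s + N.trace)) • 1 := by
  simp only [add_mul, mul_sub, h.mul_self hN, Matrix.smul_mul, Matrix.mul_smul, one_mul, mul_one]
  module

lemma det_smul_one_add_ne_zero (h : IsPerspectivitySpace 𝒩) (hN : N ∈ 𝒩) {s : K} (hs : s ≠ 0)
    (hs' : s + N.trace ≠ 0) : (s • 1 + N).det ≠ 0 := by
  intro hdet
  have hprod := congrArg Matrix.det (h.smul_one_add_mul hN s)
  rw [Matrix.det_mul, hdet, zero_mul, Matrix.det_smul, Matrix.det_one, mul_one] at hprod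
  exact pow_ne_zero _ (mul_ne_zero hs hs') hprod.symm

end IsPerspectivitySpace

end PerspectivitySpace

/-- The elements `N` of `𝒩` for which `1 + N` induces an element of `H`. -/
def perspectivityParts (H : Subgroup PSL3) (𝒩 : Submodule ℂ Mat3) : Set Mat3 :=
  {N | N ∈ 𝒩 ∧ ∃ γ ∈ H, IsLift γ (1 + N)}

namespace IsPerspectivitySpace

variable {𝒩 : Submodule ℂ Mat3} {H Γ : Subgroup PSL3} {N N' : Mat3} {γ : PSL3}

lemma one_add_trace_ne_zero (h : IsPerspectivitySpace 𝒩) (hN : N ∈ 𝒩) (hγ : IsLift γ (1 + N)) :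
    1 + N.trace ≠ 0 := by
  intro h0
  have hprod := h.smul_one_add_mul hN 1
  rw [h0, one_smul, mul_zero, zero_smul, zero_sub, mul_neg, neg_eq_zero] at hprod
  have hN0 : N = 0 :=
    ((Matrix.isUnit_iff_isUnit_det _).mpr hγ.det_ne_zero.isUnit).mul_right_eq_zero.mp hprod
  simp [hN0] at h0

lemma eq_of_isLift (h : IsPerspectivitySpace 𝒩) (hN : N ∈ 𝒩) (hN' : N' ∈ 𝒩)
    (hγ : IsLift γ (1 + N)) (hγ' : IsLift γ (1 + N')) : N = N' := by
  obtain ⟨s, hs⟩ := hγ.exists_eq_smul hγ'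
  have hscalar : (1 - s) • (1 : Mat3) = s • N - N' := by
    rw [eq_sub_iff_add_eq, sub_smul, one_smul, sub_add_eq_add_sub, hs, smul_add]
    abel
  have hmem : (1 - s) • (1 : Mat3) ∈ 𝒩 := hscalar ▸ 𝒩.sub_mem (𝒩.smul_mem s hN) hN'
  have hsq := congrFun₂ (h.mul_self hmem) 0 0
  simp only [Matrix.smul_mul, one_mul, Matrix.smul_apply, Matrix.one_apply_eq, Matrix.trace_smul,
    Matrix.trace_one, Fintype.card_fin, smul_eq_mul, mul_one] at hsq
  have hs1 : 1 - s = 0 := by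
    have : (1 - s) * (1 - s) = 0 := by push_cast at hsq; linear_combination -hsq / 2
    exact mul_self_eq_zero.mp this
  rw [hs1, zero_smul, ← sub_eq_zero.mp hs1, one_smul] at hscalar
  exact sub_eq_zero.mp hscalar.symm

lemma isCircleGroup (h : IsPerspectivitySpace 𝒩) (H : Subgroup PSL3) :
    IsCircleGroup (Matrix.traceLinearMap (Fin 3) ℂ ℂ) (perspectivityParts H 𝒩) where
  one_add_ne_zero := fun _ ⟨hN, _, _, hlift⟩ => h.one_add_trace_ne_zero hN hlift
  mul_mem := by
    rintro N ⟨hN, γ, hγ, hlift⟩ N' ⟨hN', γ', hγ', hlift'⟩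
    refine ⟨𝒩.add_mem (𝒩.add_mem hN hN') (𝒩.smul_mem _ hN), ?_⟩
    rcases h N hN N' hN' with hmul | hmul
    · refine ⟨γ * γ', H.mul_mem hγ hγ', ?_⟩
      convert hlift.mul hlift' using 1
      rw [add_mul, mul_add, mul_add, hmul, one_mul, one_mul, mul_one, Matrix.traceLinearMap_apply]
      abel
    · refine ⟨γ' * γ, H.mul_mem hγ' hγ, ?_⟩
      convert hlift'.mul hlift using 1
      rw [add_mul, mul_add, mul_add, hmul, one_mul, one_mul, mul_one, Matrix.traceLinearMap_apply]
      abel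
  inv_mem := by
    rintro N ⟨hN, γ, hγ, hlift⟩
    refine ⟨𝒩.neg_mem (𝒩.smul_mem _ hN), γ⁻¹, H.inv_mem hγ, ?_⟩
    convert hlift.inv using 1
    refine (Matrix.inv_eq_right_inv ?_).symm
    have h1 := h.one_add_trace_ne_zero hN hlift
    rw [Matrix.traceLinearMap_apply]
    have hprod := h.smul_one_add_mul hN 1
    rw [one_smul, one_mul] at hprod
    calc (1 + N) * (1 + -((1 + N.trace)⁻¹ • N))
        = (1 + N.trace)⁻¹ • ((1 + N) * ((1 + N.trace) • 1 - N)) := by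
          rw [← Matrix.mul_smul, smul_sub, inv_smul_smul₀ h1, sub_eq_add_neg]
      _ = 1 := by rw [hprod, inv_smul_smul₀ h1]

lemma finite_perspectivityParts_inter [DiscreteTopology H] (h : IsPerspectivitySpace 𝒩) (κ : ℂ)
    {K : Set Mat3} (hK : IsCompact K) :
    {N ∈ perspectivityParts H 𝒩 | N.trace = κ ∧ N ∈ K}.Finite := by
  rcases eq_or_ne (1 + κ) 0 with hκ | hκ
  · refine Set.finite_empty.subset ?_
    rintro N ⟨⟨hN, γ, -, hlift⟩, rfl, -⟩
    exact h.one_add_trace_ne_zero hN hlift hκ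
  let T : Set Mat3 := K ∩ (𝒩 ∩ {N | N.trace = κ})
  have hT : IsCompact T := hK.inter_right ((Submodule.closed_of_finiteDimensional 𝒩).inter
    (isClosed_eq continuous_id.matrix_trace continuous_const))
  have hfin := finite_setOf_exists_isLift_mem H (hT.image (continuous_const_add (1 : Mat3))) <| by
    rintro _ ⟨N, ⟨-, hN, rfl⟩, rfl⟩
    simpa only [one_smul] using h.det_smul_one_add_ne_zero hN one_ne_zero hκ
  refine (hfin.biUnion fun γ _ => Set.Subsingleton.finite
    (s := {N | N ∈ 𝒩 ∧ IsLift γ (1 + N)}) ?_).subset ?_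
  · rintro N ⟨hN, hlift⟩ N' ⟨hN', hlift'⟩
    exact h.eq_of_isLift hN hN' hlift hlift'
  · rintro N ⟨⟨hN, γ, hγ, hlift⟩, htr, hNK⟩
    exact Set.mem_biUnion ⟨hγ, 1 + N, ⟨N, ⟨hNK, hN, htr⟩, rfl⟩, hlift⟩ ⟨hN, hlift⟩

lemma infinite_setOf_isLift_one_add_smul (h : IsPerspectivitySpace 𝒩)
    (hN : N ∈ perspectivityParts H 𝒩) (hN0 : N ≠ 0) (htr : N.trace = 0) :
    {γ | γ ∈ H ∧ ∃ c : ℂ, IsLift γ (1 + c • N)}.Infinite := by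
  have hmem (n : ℕ) : ((n + 1 : ℕ) : ℂ) • N ∈ perspectivityParts H 𝒩 := by
    induction n with
    | zero => rwa [zero_add, Nat.cast_one, one_smul]
    | succ n ih =>
      have := (h.isCircleGroup H).mul_mem _ ih _ hN
      rw [Matrix.traceLinearMap_apply, htr, zero_smul, add_zero] at this
      rwa [Nat.cast_succ, add_smul, one_smul]
  choose hmem𝒩 γ hγ hlift using hmem
  refine Set.infinite_of_injective_forall_mem (f := γ) (fun m n hmn => ?_)
    fun n => ⟨hγ n, _, hlift n⟩
  have heq := h.eq_of_isLift (hmem𝒩 m) (hmem𝒩 n) (hlift m) (hmn ▸ hlift n)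
  exact Nat.succ_injective (Nat.cast_injective (smul_left_injective ℂ hN0 heq))

open scoped Matrix.Norms.Elementwise in
lemma exists_isCompactModel_of_isometric (h : IsPerspectivitySpace 𝒩) {W : Submodule ℂ V3}
    (hker : ∀ N ∈ 𝒩, N ≠ 0 → N.trace = 0 → ∀ x, N *ᵥ x = 0 → x ∈ W)
    (himage : ∀ N ∈ 𝒩, N.trace = 0 → ∀ x, N *ᵥ x ∈ W)
    (hlift : ∀ γ ∈ H, ∃ N ∈ 𝒩, ‖1 + N.trace‖ = 1 ∧ IsLift γ (1 + N)) :
    ∃ C, IsCompactModel H C {p | p.submodule ≤ W} := by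
  let Φ : ℂ × Mat3 →ₗ[ℂ] Mat3 := (LinearMap.toSpanSingleton ℂ Mat3 1).coprod LinearMap.id
  let T : Set (ℂ × Mat3) := {x | x.2 ∈ 𝒩 ∧ ‖x.1 + x.2.trace‖ = ‖x.1‖}
  have hT : IsClosed T :=
    ((Submodule.closed_of_finiteDimensional 𝒩).preimage continuous_snd).inter
      (isClosed_eq (by fun_prop) (by fun_prop))
  refine IsCompactModel.exists_of_cone Φ hT ?_ ?_ ?_
  · rintro ⟨s, N⟩ ⟨hN, hnorm⟩ c
    refine ⟨𝒩.smul_mem c hN, ?_⟩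
    simp only [Prod.smul_mk, Matrix.trace_smul, smul_eq_mul, ← mul_add, norm_mul, hnorm]
  · intro γ hγ
    obtain ⟨N, hN, hnorm, hlift⟩ := hlift γ hγ
    exact ⟨(1, N), ⟨hN, by rwa [norm_one]⟩, by simpa [Φ] using hlift⟩
  · rintro ⟨s, N⟩ ⟨hN, hnorm⟩ hne hdet v hv hvW
    have hΦ : Φ (s, N) = s • 1 + N := rfl
    have hs : s = 0 := by
      by_contra hs
      refine h.det_smul_one_add_ne_zero hN hs (fun h0 => hs ?_) hdet
      rw [h0, norm_zero] at hnorm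
      exact norm_eq_zero.mp hnorm.symm
    subst hs
    have htr : N.trace = 0 := by simpa only [zero_add, norm_zero, norm_eq_zero] using hnorm
    have hN0 : N ≠ 0 := fun h0 => hne (by rw [h0]; rfl)
    rw [hΦ, zero_smul, zero_add]
    refine ⟨fun h0 => hvW ((mk_submodule_le_iff hv).mpr (hker N hN hN0 htr v h0)), ?_⟩
    exact (mk_submodule_le_iff _).mpr (himage N hN htr v)

end IsPerspectivitySpace

lemma exists_isCompactModel_of_idempotent {H : Subgroup PSL3} {E : Mat3} (hE : IsIdempotentElem E)
    (hlift : ∀ γ ∈ H, ∃ c : ℂ, IsLift γ (1 + c • E)) :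
    ∃ C, IsCompactModel H C {p | p.submodule ≤ LinearMap.ker E.mulVecLin ∨
      p.submodule ≤ LinearMap.ker (1 - E).mulVecLin} := by
  let Φ : ℂ × ℂ →ₗ[ℂ] Mat3 :=
    (LinearMap.toSpanSingleton ℂ Mat3 (1 - E)).coprod (LinearMap.toSpanSingleton ℂ Mat3 E)
  have hEv (v : V3) : E *ᵥ (E *ᵥ v) = E *ᵥ v := by rw [Matrix.mulVec_mulVec, hE]
  refine IsCompactModel.exists_of_cone Φ isClosed_univ (fun _ _ _ => trivial) ?_ ?_
  · intro γ hγ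
    obtain ⟨c, hc⟩ := hlift γ hγ
    refine ⟨(1, 1 + c), trivial, ?_⟩
    convert hc using 1
    simp only [Φ, LinearMap.coprod_apply, LinearMap.toSpanSingleton_apply]
    module
  · rintro ⟨a, b⟩ - hne hdet v hv hvZ
    have hΦ (v : V3) : Φ (a, b) *ᵥ v = a • (v - E *ᵥ v) + b • E *ᵥ v := by
      simp only [Φ, LinearMap.coprod_apply, LinearMap.toSpanSingleton_apply, Matrix.add_mulVec,
        Matrix.smul_mulVec, Matrix.sub_mulVec, Matrix.one_mulVec]
    have hab : a = 0 ∨ b = 0 := by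
      by_contra! hab
      obtain ⟨w, hw, hw0⟩ := Matrix.exists_mulVec_eq_zero_iff.mpr hdet
      rw [hΦ] at hw0
      have hEw : E *ᵥ w = 0 := by
        have := congrArg (E *ᵥ ·) hw0
        simpa only [Matrix.mulVec_add, Matrix.mulVec_smul, Matrix.mulVec_sub, hEv, sub_self,
          smul_zero, zero_add, Matrix.mulVec_zero, smul_eq_zero_iff_right hab.2] using this
      rw [hEw, sub_zero, smul_zero, add_zero, smul_eq_zero_iff_right hab.1] at hw0
      exact hw hw0
    simp only [Set.mem_ofPred_eq, mk_submodule_le_iff, LinearMap.mem_ker, Matrix.mulVecLin_apply,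
      Matrix.sub_mulVec, Matrix.one_mulVec, not_or] at hvZ ⊢
    rw [hΦ]
    rcases hab with rfl | rfl
    · have hb : b ≠ 0 := fun h0 => hne (by rw [h0]; rfl)
      rw [zero_smul, zero_add]
      refine ⟨smul_ne_zero hb hvZ.1, Or.inr ?_⟩
      rw [Matrix.mulVec_smul, hEv, sub_self]
    · have ha : a ≠ 0 := fun h0 => hne (by rw [h0]; rfl)
      rw [zero_smul, add_zero]
      refine ⟨smul_ne_zero ha hvZ.2, Or.inl ?_⟩
      rw [Matrix.mulVec_smul, Matrix.mulVec_sub, hEv, sub_self, smul_zero]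

lemma IsLift.smul_mk_eq_self {γ : PSL3} {M : Mat3} (h : IsLift γ M) {v : V3} (hv : v ≠ 0) {c : ℂ}
    (hMv : M *ᵥ v = c • v) :
    γ • (Projectivization.mk ℂ v hv : P2) = Projectivization.mk ℂ v hv := by
  rw [h.smul_mk hv, Projectivization.mk_eq_mk_iff']
  exact ⟨c, hMv.symm⟩

section Domains

variable {Γ H : Subgroup PSL3} [DiscreteTopology Γ] {Ω : Set P2}

lemma Li_le_two_of_finite (hle : H ≤ Γ) (hrel : H.relIndex Γ ≠ 0) (hfin : (H : Set PSL3).Finite)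
    (hΩ : IsDiscontinuityDomain Γ Ω) : Li Ω ≤ 2 := by
  have hbot : (⊥ : Subgroup PSL3).relIndex Γ ≠ 0 := by
    have : Finite H := hfin
    rw [← Subgroup.relIndex_mul_relIndex ⊥ H Γ bot_le hle, Subgroup.relIndex_bot_left]
    exact mul_ne_zero Nat.card_pos.ne' hrel
  have hmodel : IsCompactModel ⊥ {1} (∅ : Set P2) :=
    { isCompact := isCompact_singleton
      exists_lift := fun γ hγ => ⟨1, rfl, Subgroup.mem_bot.mp hγ ▸ IsLift.one⟩
      mulVec_ne_zero := by
        rintro _ rfl v hv -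
        rwa [Matrix.one_mulVec]
      mact_mem := by
        rintro _ rfl hdet
        simp at hdet }
  have hempty := hmodel.compl_subset bot_le hbot isClosed_empty (Set.empty_subset _) hΩ
  exact Li_le_two_of_submodule_le bot_ne_top bot_ne_top fun p hp => (hempty hp).elim

lemma Li_le_two_of_idempotent {E : Mat3} (hE : IsIdempotentElem E) (hE0 : E ≠ 0) (hE1 : E ≠ 1)
    (hle : H ≤ Γ) (hrel : H.relIndex Γ ≠ 0) (hinf : (H : Set PSL3).Infinite)
    (hlift : ∀ γ ∈ H, ∃ c : ℂ, IsLift γ (1 + c • E)) (hΩ : IsDiscontinuityDomain Γ Ω) :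
    Li Ω ≤ 2 := by
  obtain ⟨C, hC⟩ := exists_isCompactModel_of_idempotent hE hlift
  have hker {M : Mat3} (hM : M ≠ 0) : LinearMap.ker M.mulVecLin ≠ ⊤ := by
    rwa [Ne, LinearMap.ker_eq_top, ← Matrix.toLin'_apply', LinearEquiv.map_eq_zero_iff]
  refine Li_le_two_of_submodule_le (hker hE0) (hker (sub_ne_zero.mpr hE1.symm)) fun p hp =>
    hC.compl_subset hle hrel ?_ ?_ hΩ hp
  · exact (isClosed_setOf_submodule_le _).union (isClosed_setOf_submodule_le _)
  · intro p hp
    refine hinf.mono fun γ hγ => ⟨hγ, ?_⟩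
    obtain ⟨c, hc⟩ := hlift γ hγ
    induction p using Projectivization.ind with
    | h v hv =>
      simp only [Set.mem_ofPred_eq, mk_submodule_le_iff, LinearMap.mem_ker,
        Matrix.mulVecLin_apply, Matrix.sub_mulVec, Matrix.one_mulVec, sub_eq_zero] at hp
      rcases hp with hv0 | hv1
      · refine hc.smul_mk_eq_self hv (c := 1) ?_
        rw [Matrix.add_mulVec, Matrix.smul_mulVec, hv0, Matrix.one_mulVec, smul_zero, add_zero,
          one_smul]
      · refine hc.smul_mk_eq_self hv (c := 1 + c) ?_
        rw [Matrix.add_mulVec, Matrix.smul_mulVec, ← hv1, Matrix.one_mulVec, add_smul, one_smul]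

namespace IsPerspectivitySpace

variable {𝒩 : Submodule ℂ Mat3}

lemma Li_le_two_of_isometric (h : IsPerspectivitySpace 𝒩) {W : Submodule ℂ V3} (hW : W ≠ ⊤)
    (hker : ∀ N ∈ 𝒩, N ≠ 0 → N.trace = 0 → ∀ x, N *ᵥ x = 0 ↔ x ∈ W)
    (himage : ∀ N ∈ 𝒩, N.trace = 0 → ∀ x, N *ᵥ x ∈ W) (hle : H ≤ Γ) (hrel : H.relIndex Γ ≠ 0)
    (hlift : ∀ γ ∈ H, ∃ N ∈ 𝒩, ‖1 + N.trace‖ = 1 ∧ IsLift γ (1 + N)) {N : Mat3}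
    (hN : N ∈ perspectivityParts H 𝒩) (hN0 : N ≠ 0) (htr : N.trace = 0)
    (hΩ : IsDiscontinuityDomain Γ Ω) : Li Ω ≤ 2 := by
  obtain ⟨C, hC⟩ := h.exists_isCompactModel_of_isometric
    (fun N hN hN0 htr x => (hker N hN hN0 htr x).mp) himage hlift
  refine Li_le_two_of_submodule_le hW hW fun p hp =>
    Or.inl (hC.compl_subset hle hrel (isClosed_setOf_submodule_le W) ?_ hΩ hp)
  intro p hp
  refine (h.infinite_setOf_isLift_one_add_smul hN hN0 htr).mono ?_
  rintro γ ⟨hγ, c, hc⟩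
  refine ⟨hγ, ?_⟩
  induction p using Projectivization.ind with
  | h v hv =>
    have hNv : N *ᵥ v = 0 := (hker N hN.1 hN0 htr v).mpr ((mk_submodule_le_iff hv).mp hp)
    refine hc.smul_mk_eq_self hv (c := 1) ?_
    rw [Matrix.add_mulVec, Matrix.smul_mulVec, hNv, Matrix.one_mulVec, smul_zero, add_zero,
      one_smul]

theorem Li_le_two (h : IsPerspectivitySpace 𝒩) {W : Submodule ℂ V3} (hW : W ≠ ⊤)
    (hker : ∀ N ∈ 𝒩, N ≠ 0 → N.trace = 0 → ∀ x, N *ᵥ x = 0 ↔ x ∈ W)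
    (himage : ∀ N ∈ 𝒩, N.trace = 0 → ∀ x, N *ᵥ x ∈ W) (hle : H ≤ Γ) (hrel : H.relIndex Γ ≠ 0)
    (hlift : ∀ γ ∈ H, ∃ N ∈ 𝒩, IsLift γ (1 + N)) (hΩ : IsDiscontinuityDomain Γ Ω) :
    Li Ω ≤ 2 := by
  have : DiscreteTopology H := DiscreteTopology.of_subset ‹_› hle
  rcases Set.finite_or_infinite (H : Set PSL3) with hfin | hinf
  · exact Li_le_two_of_finite hle hrel hfin hΩ
  have hnt : ∃ N ∈ perspectivityParts H 𝒩, N ≠ 0 := by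
    by_contra! h0
    refine hinf ((finite_setOf_exists_isLift_mem H (isCompact_singleton (x := (1 : Mat3)))
      (by simp)).subset fun γ hγ => ⟨hγ, 1, rfl, ?_⟩)
    obtain ⟨N, hN, hγN⟩ := hlift γ hγ
    rwa [h0 N ⟨hN, γ, hγ, hγN⟩, add_zero] at hγN
  rcases (h.isCircleGroup H).isometric_or_exists_eq_smul
    (fun κ K hK => h.finite_perspectivityParts_inter κ hK) hnt with
    ⟨hnorm, N, hN, hN0, htr⟩ | ⟨g, hg, hτg, hline⟩
  · refine h.Li_le_two_of_isometric hW hker himage hle hrel (fun γ hγ => ?_) hN hN0 htr hΩ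
    obtain ⟨N, hN, hγN⟩ := hlift γ hγ
    exact ⟨N, hN, hnorm N ⟨hN, γ, hγ, hγN⟩, hγN⟩
  · rw [Matrix.traceLinearMap_apply] at hτg
    have htr : (g.trace⁻¹ • g).trace = 1 := by
      rw [Matrix.trace_smul, smul_eq_mul, inv_mul_cancel₀ hτg]
    refine Li_le_two_of_idempotent (E := g.trace⁻¹ • g) ?_ ?_ ?_ hle hrel hinf (fun γ hγ => ?_) hΩ
    · rw [IsIdempotentElem, Matrix.smul_mul, Matrix.mul_smul, h.mul_self hg.1,
        inv_smul_smul₀ hτg]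
    · intro h0
      simp [h0] at htr
    · intro h1
      simp [h1] at htr
    · obtain ⟨N, hN, hγN⟩ := hlift γ hγ
      refine ⟨N.trace, ?_⟩
      have hNg := hline N ⟨hN, γ, hγ, hγN⟩
      rw [Matrix.traceLinearMap_apply, Matrix.traceLinearMap_apply, div_eq_mul_inv, mul_smul]
        at hNg
      rwa [← hNg]

end IsPerspectivitySpace

end Domains

/-! ### Perspectivities with a common axis or a common centre -/

section RankOne

variable {K n : Type*} [Field K] [Fintype n]

lemma exists_eq_vecMulVec {m : Type*} {χ : n → K} (hχ : χ ≠ 0) {N : Matrix m n K}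
    (hN : ∀ x, χ ⬝ᵥ x = 0 → N *ᵥ x = 0) : ∃ u, N = vecMulVec u χ := by
  obtain ⟨z, hz⟩ : ∃ z, χ ⬝ᵥ z ≠ 0 := by
    by_contra! h
    exact hχ (dotProduct_eq_zero χ h)
  refine ⟨(χ ⬝ᵥ z)⁻¹ • N *ᵥ z, Matrix.ext_iff_mulVec.mpr fun x => ?_⟩
  have hx := hN (x - (χ ⬝ᵥ x * (χ ⬝ᵥ z)⁻¹) • z) <| by
    rw [dotProduct_sub, dotProduct_smul, smul_eq_mul, inv_mul_cancel_right₀ hz, sub_self]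
  rw [Matrix.mulVec_sub, Matrix.mulVec_smul, sub_eq_zero] at hx
  rw [hx, vecMulVec_mulVec, op_smul_eq_smul, smul_smul]

lemma linearIndependent_pair_of_dotProduct_eq_one {φ ψ v : n → K} (hφ : φ ⬝ᵥ v = 1)
    (hψ : ψ ⬝ᵥ v = 1) (hne : φ ≠ ψ) : LinearIndependent K ![φ, ψ] := by
  have hφ0 : φ ≠ 0 := by
    rintro rfl
    exact zero_ne_one ((zero_dotProduct v).symm.trans hφ)
  refine (LinearIndependent.pair_iff' hφ0).mpr fun a ha => hne ?_
  have ha1 : a = 1 := by rwa [← ha, smul_dotProduct, hφ, smul_eq_mul, mul_one] at hψ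
  rw [← ha, ha1, one_smul]

variable {𝒩 : Submodule K (Matrix n n K)}

lemma isPerspectivitySpace_of_axis {χ : n → K}
    (h : ∀ N ∈ 𝒩, ∃ u, N = vecMulVec u χ) : IsPerspectivitySpace 𝒩 := by
  intro N hN N' hN'
  obtain ⟨u, rfl⟩ := h N hN
  obtain ⟨u', rfl⟩ := h N' hN'
  exact Or.inl (by rw [vecMulVec_mul_vecMulVec, trace_vecMulVec, dotProduct_comm, vecMulVec_smul])

lemma isPerspectivitySpace_of_center {q : n → K}
    (h : ∀ N ∈ 𝒩, ∃ χ, N = vecMulVec q χ) : IsPerspectivitySpace 𝒩 := by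
  intro N hN N' hN'
  obtain ⟨χ, rfl⟩ := h N hN
  obtain ⟨χ', rfl⟩ := h N' hN'
  exact Or.inr (by rw [vecMulVec_mul_vecMulVec, trace_vecMulVec, dotProduct_comm, vecMulVec_smul])

end RankOne

lemma exists_forall_eq_vecMulVec {a b : V3} (hab : LinearIndependent ℂ ![a, b]) :
    ∃ χ : V3, χ ≠ 0 ∧ χ ⬝ᵥ a = 0 ∧ χ ⬝ᵥ b = 0 ∧
      ∀ N : Mat3, N *ᵥ a = 0 → N *ᵥ b = 0 → ∃ u, N = vecMulVec u χ := by
  have hrank := finrank_span_eq_card hab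
  obtain ⟨χ, hχ, hker⟩ := exists_dotProduct_eq_zero_iff_mem
    (W := Submodule.span ℂ (Set.range ![a, b])) (by rw [hrank]; rfl)
  refine ⟨χ, hχ, (hker a).mpr (Submodule.subset_span ⟨0, rfl⟩),
    (hker b).mpr (Submodule.subset_span ⟨1, rfl⟩), fun N hNa hNb => ?_⟩
  have hle : Submodule.span ℂ (Set.range ![a, b]) ≤ LinearMap.ker N.mulVecLin := by
    rw [Submodule.span_le, Set.range_subset_iff, Fin.forall_fin_two]
    exact ⟨hNa, hNb⟩
  exact exists_eq_vecMulVec hχ fun x hx => hle ((hker x).mp hx)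

section AxisAndCenter

variable {Γ H : Subgroup PSL3} [DiscreteTopology Γ] {Ω : Set P2}

lemma Li_le_two_of_axis (hle : H ≤ Γ) (hrel : H.relIndex Γ ≠ 0) (hΩ : IsDiscontinuityDomain Γ Ω)
    {χ : V3} (hχ : χ ≠ 0) (hlift : ∀ γ ∈ H, ∃ u, IsLift γ (1 + vecMulVec u χ)) : Li Ω ≤ 2 := by
  let 𝒩 : Submodule ℂ Mat3 := LinearMap.range ((vecMulVecBilin ℂ ℂ).flip χ)
  have h𝒩 : ∀ N ∈ 𝒩, ∃ u, N = vecMulVec u χ := by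
    rintro _ ⟨u, rfl⟩
    exact ⟨u, rfl⟩
  let f : Module.Dual ℂ V3 := dotProductEquiv ℂ (Fin 3) χ
  have hf : LinearMap.ker f ≠ ⊤ := fun h =>
    hχ ((LinearEquiv.map_eq_zero_iff _).mp (LinearMap.ker_eq_top.mp h))
  refine (isPerspectivitySpace_of_axis h𝒩).Li_le_two hf ?_ ?_ hle hrel ?_ hΩ
  · intro N hN hN0 _ x
    obtain ⟨u, rfl⟩ := h𝒩 N hN
    have hu : u ≠ 0 := (not_or.mp (vecMulVec_eq_zero.not.mp hN0)).1
    rw [vecMulVec_mulVec, op_smul_eq_smul, smul_eq_zero_iff_left hu]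
    exact Iff.rfl
  · intro N hN htr x
    obtain ⟨u, rfl⟩ := h𝒩 N hN
    rw [trace_vecMulVec, dotProduct_comm] at htr
    rw [vecMulVec_mulVec, op_smul_eq_smul]
    exact (LinearMap.ker f).smul_mem _ htr
  · intro γ hγ
    obtain ⟨u, hu⟩ := hlift γ hγ
    exact ⟨_, ⟨u, rfl⟩, hu⟩

lemma Li_le_two_of_center (hle : H ≤ Γ) (hrel : H.relIndex Γ ≠ 0) (hΩ : IsDiscontinuityDomain Γ Ω)
    {q v : V3} (hqv : LinearIndependent ℂ ![q, v])
    (hlift : ∀ γ ∈ H, ∃ χ, χ ⬝ᵥ v = 0 ∧ IsLift γ (1 + vecMulVec q χ)) : Li Ω ≤ 2 := by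
  let 𝒩 : Submodule ℂ Mat3 :=
    (LinearMap.ker (dotProductEquiv ℂ (Fin 3) v)).map (vecMulVecBilin ℂ ℂ q)
  have h𝒩 : ∀ N ∈ 𝒩, ∃ χ, χ ⬝ᵥ v = 0 ∧ N = vecMulVec q χ := by
    rintro _ ⟨χ, hχ, rfl⟩
    exact ⟨χ, (dotProduct_comm χ v).trans hχ, rfl⟩
  have hW := finrank_span_eq_card hqv
  set W := Submodule.span ℂ (Set.range ![q, v])
  have hq : q ∈ W := Submodule.subset_span ⟨0, rfl⟩
  refine (isPerspectivitySpace_of_center fun N hN => (h𝒩 N hN).imp fun _ => And.right).Li_le_two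
    (W := W) ?_ ?_ ?_ hle hrel ?_ hΩ
  · intro htop
    rw [htop, finrank_top, Module.finrank_fin_fun, Fintype.card_fin] at hW
    lia
  · intro N hN hN0 htr x
    obtain ⟨χ, hχv, rfl⟩ := h𝒩 N hN
    obtain ⟨hq0, hχ0⟩ := not_or.mp (vecMulVec_eq_zero.not.mp hN0)
    rw [vecMulVec_mulVec, op_smul_eq_smul, smul_eq_zero_iff_left hq0]
    have hle : W ≤ LinearMap.ker (dotProductEquiv ℂ (Fin 3) χ) := by
      rw [trace_vecMulVec, dotProduct_comm] at htr
      rw [Submodule.span_le, Set.range_subset_iff, Fin.forall_fin_two]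
      exact ⟨htr, hχv⟩
    exact dotProduct_eq_zero_iff_mem (by rw [hW]; rfl) hχ0 hle x
  · intro N hN _ x
    obtain ⟨χ, -, rfl⟩ := h𝒩 N hN
    rw [vecMulVec_mulVec, op_smul_eq_smul]
    exact W.smul_mem _ hq
  · intro γ hγ
    obtain ⟨χ, hχ, hlift⟩ := hlift γ hγ
    exact ⟨_, ⟨χ, (dotProduct_comm v χ).trans hχ, rfl⟩, hlift⟩

end AxisAndCenter

/-! ### Fixed points and fixed lines -/

lemma exists_isLift_mulVec_eq {γ : PSL3} {v : V3} (hv : v ≠ 0)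
    (h : γ • (Projectivization.mk ℂ v hv : P2) = Projectivization.mk ℂ v hv) :
    ∃ M, IsLift γ M ∧ M *ᵥ v = v := by
  obtain ⟨M, hM⟩ := exists_isLift γ
  rw [hM.smul_mk, Projectivization.mk_eq_mk_iff'] at h
  obtain ⟨c, hc⟩ := h
  have hc0 : c ≠ 0 := by
    rintro rfl
    exact hM.mulVec_ne_zero hv (by rw [← hc, zero_smul])
  exact ⟨c⁻¹ • M, hM.smul (inv_ne_zero hc0), by rw [smul_mulVec, ← hc, inv_smul_smul₀ hc0]⟩

lemma IsLift.vecMul_eq {γ : PSL3} {M : Mat3} (hM : IsLift γ M) {v φ : V3} (hMv : M *ᵥ v = v)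
    (hφv : φ ⬝ᵥ v = 1) {ℓ : Set P2} (hφ : ∀ x hx, Projectivization.mk ℂ x hx ∈ ℓ ↔ φ ⬝ᵥ x = 0)
    (hℓ : γ • ℓ = ℓ) : φ ᵥ* M = φ := by
  refine dotProduct_eq_iff.mp fun x => ?_
  have hker {y : V3} (hy : φ ⬝ᵥ y = 0) : φ ⬝ᵥ M *ᵥ y = 0 := by
    rcases eq_or_ne y 0 with rfl | hy0
    · rw [mulVec_zero, dotProduct_zero]
    · have hmem := Set.smul_mem_smul_set (a := γ) ((hφ y hy0).mpr hy)
      rwa [hℓ, hM.smul_mk, hφ] at hmem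
  have hx := hker (y := x - (φ ⬝ᵥ x) • v)
    (by rw [dotProduct_sub, dotProduct_smul, hφv, smul_eq_mul, mul_one, sub_self])
  rw [mulVec_sub, mulVec_smul, hMv, dotProduct_sub, dotProduct_smul, hφv, smul_eq_mul, mul_one,
    sub_eq_zero] at hx
  rw [← dotProduct_mulVec, hx]

section FiniteIndex

variable {G X : Type*} [Group G] [MulAction G X] {Γ : Subgroup G} {x : X}

lemma relIndex_stabilizer_ne_zero (h : (MulAction.orbit Γ x).Finite) :
    (MulAction.stabilizer G x).relIndex Γ ≠ 0 := by
  have hstab : (MulAction.stabilizer G x).subgroupOf Γ = MulAction.stabilizer Γ x := rfl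
  rw [Subgroup.relIndex, hstab, MulAction.index_stabilizer]
  exact ((Set.ncard_pos h).mpr (MulAction.nonempty_orbit x)).ne'

lemma finite_orbit_of_forall_smul_mem {s : Set X} (hs : s.Finite)
    (hsmul : ∀ γ ∈ Γ, ∀ y ∈ s, γ • y ∈ s) (hx : x ∈ s) : (MulAction.orbit Γ x).Finite := by
  refine hs.subset ?_
  rintro _ ⟨γ, rfl⟩
  exact hsmul γ γ.2 x hx

end FiniteIndex

section FiniteOrbits

variable {Γ : Subgroup PSL3} [DiscreteTopology Γ] {Ω : Set P2}

/-- A finite index subgroup consists of perspectivities with axis the line through `p` and `q`. -/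
theorem Li_le_two_of_two_points_of_line (hΩ : IsDiscontinuityDomain Γ Ω) {p q : P2} (hpq : p ≠ q)
    {ℓ : Set P2} (hℓ : IsLine ℓ) (hpℓ : p ∉ ℓ) (hqℓ : q ∉ ℓ) (hp : (MulAction.orbit Γ p).Finite)
    (hq : (MulAction.orbit Γ q).Finite) (hℓfin : (MulAction.orbit Γ ℓ).Finite) : Li Ω ≤ 2 := by
  induction p using Projectivization.ind with | h v hv => ?_
  induction q using Projectivization.ind with | h w hw => ?_
  obtain ⟨φ, hφv, hφ⟩ := hℓ.exists_dotProduct_eq_one hv hpℓ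
  have hφw : φ ⬝ᵥ w ≠ 0 := (hφ w hw).not.mp hqℓ
  have hvw : LinearIndependent ℂ ![v, w] := by
    rwa [← crossProduct_ne_zero_iff_linearIndependent, ne_eq,
      ← Projectivization.mk_eq_mk_iff_crossProduct_eq_zero hv hw]
  obtain ⟨χ, hχ, -, -, hχN⟩ := exists_forall_eq_vecMulVec hvw
  have hrel := Subgroup.relIndex_inf_ne_zero (Subgroup.relIndex_inf_ne_zero
    (relIndex_stabilizer_ne_zero hp) (relIndex_stabilizer_ne_zero hq))
    (relIndex_stabilizer_ne_zero hℓfin)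
  refine Li_le_two_of_axis inf_le_right (by rwa [Subgroup.inf_relIndex_right]) hΩ hχ ?_
  rintro γ ⟨⟨⟨hγv, hγw⟩, hγℓ⟩, -⟩
  obtain ⟨M, hM, hMv⟩ := exists_isLift_mulVec_eq hv hγv
  have hφM := hM.vecMul_eq hMv hφv hφ hγℓ
  have hMw : M *ᵥ w = w := by
    obtain ⟨c, hc⟩ := (Projectivization.mk_eq_mk_iff' ..).mp ((hM.smul_mk hw).symm.trans hγw)
    have hcφ : c * (φ ⬝ᵥ w) = φ ⬝ᵥ w := by
      rw [← smul_eq_mul, ← dotProduct_smul, hc, dotProduct_mulVec, hφM]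
    rw [← hc, mul_right_cancel₀ hφw (hcφ.trans (one_mul _).symm), one_smul]
  obtain ⟨u, hu⟩ := hχN (M - 1) (by rw [sub_mulVec, hMv, one_mulVec, sub_self])
    (by rw [sub_mulVec, hMw, one_mulVec, sub_self])
  exact ⟨u, by rwa [← hu, add_sub_cancel]⟩

/-- A finite index subgroup consists of perspectivities with centre the common point of the two
lines. -/
theorem Li_le_two_of_point_of_two_lines (hΩ : IsDiscontinuityDomain Γ Ω) {p : P2}
    {m₁ m₂ : Set P2} (h₁ : IsLine m₁) (h₂ : IsLine m₂) (hne : m₁ ≠ m₂) (hp₁ : p ∉ m₁) (hp₂ : p ∉ m₂)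
    (hp : (MulAction.orbit Γ p).Finite) (hm₁ : (MulAction.orbit Γ m₁).Finite)
    (hm₂ : (MulAction.orbit Γ m₂).Finite) : Li Ω ≤ 2 := by
  induction p using Projectivization.ind with | h v hv => ?_
  obtain ⟨φ, hφv, hφ⟩ := h₁.exists_dotProduct_eq_one hv hp₁
  obtain ⟨ψ, hψv, hψ⟩ := h₂.exists_dotProduct_eq_one hv hp₂
  have hφψ : φ ≠ ψ := by
    rintro rfl
    refine hne (Set.ext fun x => ?_)
    induction x using Projectivization.ind with
    | h x hx => rw [hφ x hx, hψ x hx]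
  obtain ⟨q, hq, hqφ, -, hqN⟩ :=
    exists_forall_eq_vecMulVec (linearIndependent_pair_of_dotProduct_eq_one hφv hψv hφψ)
  have hqv : LinearIndependent ℂ ![q, v] := by
    refine (LinearIndependent.pair_iff' hq).mpr fun a ha => ?_
    rw [← ha, dotProduct_smul, dotProduct_comm, hqφ, smul_zero] at hφv
    exact zero_ne_one hφv
  have hrel := Subgroup.relIndex_inf_ne_zero (Subgroup.relIndex_inf_ne_zero
    (relIndex_stabilizer_ne_zero hp) (relIndex_stabilizer_ne_zero hm₁))
    (relIndex_stabilizer_ne_zero hm₂)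
  refine Li_le_two_of_center inf_le_right (by rwa [Subgroup.inf_relIndex_right]) hΩ hqv ?_
  rintro γ ⟨⟨⟨hγv, hγ₁⟩, hγ₂⟩, -⟩
  obtain ⟨M, hM, hMv⟩ := exists_isLift_mulVec_eq hv hγv
  have hφM := hM.vecMul_eq hMv hφv hφ hγ₁
  have hψM := hM.vecMul_eq hMv hψv hψ hγ₂
  obtain ⟨χ, hχ⟩ := hqN (M - 1)ᵀ
    (by rw [mulVec_transpose, vecMul_sub, vecMul_one, hφM, sub_self])
    (by rw [mulVec_transpose, vecMul_sub, vecMul_one, hψM, sub_self])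
  rw [← transpose_vecMulVec, transpose_inj] at hχ
  refine ⟨χ, ?_, by rwa [← hχ, add_sub_cancel]⟩
  have hNv : (M - 1) *ᵥ v = 0 := by rw [sub_mulVec, hMv, one_mulVec, sub_self]
  rw [hχ, vecMulVec_mulVec, op_smul_eq_smul] at hNv
  exact (smul_eq_zero_iff_left hq).mp hNv

end FiniteOrbits

section MaximalFamily

variable {Γ : Subgroup PSL3} {Ω : Set P2} {L : Set (Set P2)}

lemma smul_mem_crossings {S : Set (Set P2)} {γ : PSL3} (hS : ∀ m ∈ S, γ • m ∈ S) {x : P2}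
    (hx : x ∈ crossings S) : γ • x ∈ crossings S := by
  obtain ⟨m₁, h₁, m₂, h₂, hne, hx⟩ := hx
  refine ⟨γ • m₁, hS m₁ h₁, γ • m₂, hS m₂ h₂, (MulAction.injective γ).ne hne, ?_⟩
  rw [← Set.smul_set_inter, hx, Set.smul_set_singleton]

lemma finite_orbit_of_mem_manyLines (hΩ : IsDiscontinuityDomain Γ Ω)
    (hL : Maximal (· ∈ genFamilies Ω) L) (hnt : L.Nontrivial) (hfin : L.Finite) {v : P2}
    (hv : v ∈ manyLines Ω) : (MulAction.orbit Γ v).Finite :=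
  finite_orbit_of_forall_smul_mem
    ((crossings_finite hfin).subset (manyLines_subset_crossings hL hnt hfin))
    (fun _ hγ _ => smul_mem_manyLines hΩ hγ) hv

lemma finite_orbit_of_mem_sporadicLines (hΩ : IsDiscontinuityDomain Γ Ω)
    (hL : Maximal (· ∈ genFamilies Ω) L) (hnt : L.Nontrivial) (hfin : L.Finite) {m : Set P2}
    (hm : m ∈ sporadicLines Ω) : (MulAction.orbit Γ m).Finite :=
  finite_orbit_of_forall_smul_mem (finite_sporadicLines hL hnt hfin)
    (fun _ hγ _ => smul_mem_sporadicLines hΩ hγ) hm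

lemma exists_finite_orbit_of_subsingleton_manyLines (hΩ : IsDiscontinuityDomain Γ Ω)
    (hL : Maximal (· ∈ genFamilies Ω) L) (hnt : L.Nontrivial) (hfin : L.Finite)
    (hmany : (manyLines Ω).Subsingleton) :
    ∃ v, (MulAction.orbit Γ v).Finite ∧ manyLines Ω ⊆ {v} := by
  rcases hmany.eq_empty_or_singleton with hempty | ⟨v, hv⟩
  · have hsporfin := finite_sporadicLines hL hnt hfin
    obtain ⟨m₁, h₁, m₂, h₂, hne⟩ := hnt
    have hspor : L ⊆ sporadicLines Ω := fun m hm =>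
      ⟨hL.prop.1 m hm, hempty ▸ Set.disjoint_empty m⟩
    obtain ⟨v, hv⟩ := (hspor h₁).1.1.exists_inter_eq_singleton (hspor h₂).1.1 hne
    refine ⟨v, ?_, hempty ▸ Set.empty_subset _⟩
    exact finite_orbit_of_forall_smul_mem (crossings_finite hsporfin)
      (fun γ hγ x => smul_mem_crossings fun m => smul_mem_sporadicLines hΩ hγ)
      ⟨m₁, hspor h₁, m₂, hspor h₂, hne, hv⟩
  · exact ⟨v, finite_orbit_of_mem_manyLines hΩ hL hnt hfin (hv ▸ rfl), hv.subset⟩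

end MaximalFamily

theorem infinite_orbit_of_line_avoiding_vertices_general (Γ : Subgroup PSL3) [DiscreteTopology Γ]
    (Ω : Set P2) (hΩ : IsDiscontinuityDomain Γ Ω) (L : Set (Set P2))
    (hL : Maximal (· ∈ genFamilies Ω) L) (hfin : L.Finite) (h4 : 4 ≤ L.encard) (ℓ : Set P2)
    (hℓ : IsLine ℓ) (hvert : ∀ v, IsVertex Ω L v → v ∉ ℓ) : (MulAction.orbit Γ ℓ).Infinite := by
  intro hℓfin
  have hLi : ¬ Li Ω ≤ 2 := fun h =>
    absurd ((h4.trans (Set.encard_le_encard hL.prop.1)).trans h) (by norm_num)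
  have hnt : L.Nontrivial := Set.one_lt_encard_iff_nontrivial.mp (lt_of_lt_of_le (by norm_num) h4)
  have havoid {v : P2} (hv : v ∈ manyLines Ω) : v ∉ ℓ :=
    hvert v (isVertex_of_mem_manyLines hL hnt hfin hv)
  have horbit {v : P2} : v ∈ manyLines Ω → (MulAction.orbit Γ v).Finite :=
    finite_orbit_of_mem_manyLines hΩ hL hnt hfin
  rcases (manyLines Ω).subsingleton_or_nontrivial with hmany | ⟨p, hp, q, hq, hpq⟩
  · obtain ⟨v, hvfin, hv⟩ := exists_finite_orbit_of_subsingleton_manyLines hΩ hL hnt hfin hmany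
    obtain ⟨m₁, h₁, m₂, h₂, hne, hv₁, hv₂⟩ := exists_two_lines_avoiding hL.prop.2 h4 v
    have hfixed {m : Set P2} (hm : m ∈ L) (hvm : v ∉ m) : (MulAction.orbit Γ m).Finite :=
      finite_orbit_of_mem_sporadicLines hΩ hL hnt hfin
        ⟨hL.prop.1 m hm, (Set.disjoint_singleton_right.mpr hvm).mono_right hv⟩
    exact hLi (Li_le_two_of_point_of_two_lines hΩ (hL.prop.1 m₁ h₁).1 (hL.prop.1 m₂ h₂).1 hne hv₁
      hv₂ hvfin (hfixed h₁ hv₁) (hfixed h₂ hv₂))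
  · exact hLi (Li_le_two_of_two_points_of_line hΩ hpq hℓ (havoid hp) (havoid hq) (horbit hp)
      (horbit hq) hℓfin)

theorem infinite_orbit_of_line_avoiding_vertices
    (Γ : Subgroup PSL3) (hΓ : DiscreteTopology ↥Γ) (Ω : Set P2)
    (hΩ : Ω = eqSet Γ ∨ Ω = kulkarniRegion Γ ∨ MaxDisc Γ Ω)
    (h4 : 4 ≤ LiG Ω) (hfin : LiG Ω ≠ ⊤)
    (L : Set (Set P2)) (hL : L ∈ genFamilies Ω) (hcard : L.encard = LiG Ω) :
    ∀ ℓ : Set P2, IsLine ℓ → (∀ v : P2, IsVertex Ω L v → v ∉ ℓ) →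
      {s : Set P2 | ∃ γ ∈ Γ, s = pact γ '' ℓ}.Infinite := by
  intro ℓ hℓ hvert
  have hLfin : L.Finite := Set.encard_ne_top_iff.mp (hcard ▸ hfin)
  refine (infinite_orbit_of_line_avoiding_vertices_general Γ Ω hΩ L
    (maximal_genFamilies_of_encard_eq_LiG hL hcard hLfin) hLfin (hcard ▸ h4) ℓ hℓ hvert).mono ?_
  rintro _ ⟨γ, rfl⟩
  exact ⟨γ, γ.2, rfl⟩
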